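/- arXiv:1501.03566 — 8 statements merged into one kernel-verified Lean document; each statement's English description precedes it below -/
import Mathlib

section
/- Let d ≥ 1 and let M be a t×n binary matrix with n > t that is d-disjunct and in which every column has weight exactly d+1. Then t ≥ (d+1)². -/
/-!
A non-isolated column shares at most one row with any other column: if it shared two, then the other
column, together with one further column through each of the at most `d - 1` remaining rows, would
cover it.
Discarding the isolated columns and the rows private to them leaves more columns than rows, and the
remaining columns have weight exactly `d + 1`, so some row `r` lies in at least `d + 2` of them.
Away from `r` these columns are disjoint, which gives `1 + (d + 2) * d = (d + 1) ^ 2` rows.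
-/

open Finset

/-- A family of columns (each column = the finset of rows where it has a 1)
is `d`-disjunct if no column is contained in the union of `≤ d` other columns. -/
def Disjunct {ι ρ : Type*} [DecidableEq ρ] (d : ℕ) (col : ι → Finset ρ) : Prop :=
  ∀ j : ι, ∀ S : Finset ι, j ∉ S → S.card ≤ d → ¬ col j ⊆ S.biUnion col

/-- A column `j` is isolated if it contains a row belonging to no other column. -/
def IsolatedCol {ι ρ : Type*} (col : ι → Finset ρ) (j : ι) : Prop :=
  ∃ i ∈ col j, ∀ j', i ∈ col j' → j' = j

lemma not_isolatedCol_iff {ι ρ : Type*} {col : ι → Finset ρ} {j : ι} :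
    ¬ IsolatedCol col j ↔ ∀ i ∈ col j, ∃ k ≠ j, i ∈ col k := by
  simp only [IsolatedCol, not_exists, not_and, not_forall, exists_prop, and_comm, ne_eq]

namespace Disjunct

variable {ι ρ : Type*} [DecidableEq ρ] {d : ℕ} {col : ι → Finset ρ} {j : ι}

/- Adding to `S` one further column through each row of `col j` that `S` misses gives a family
covering `col j`, so it has more than `d` members. -/
lemma lt_card_add_card_sdiff_biUnion (h : Disjunct d col) (hj : ¬ IsolatedCol col j)
    {S : Finset ι} (hS : j ∉ S) : d < #S + #(col j \ S.biUnion col) := by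
  classical
  by_contra! hle
  have : Nonempty ι := ⟨j⟩
  choose! g hgj hg using not_isolatedCol_iff.1 hj
  set T := (col j \ S.biUnion col).image g
  have hjT : j ∉ T := by
    simp only [T, mem_image, mem_sdiff, not_exists, not_and]
    exact fun i hi ↦ hgj i hi.1
  have hcard : #(S ∪ T) ≤ d :=
    (card_union_le S T).trans ((Nat.add_le_add_left card_image_le _).trans hle)
  have hcover : col j ⊆ (S ∪ T).biUnion col := by
    intro i hi
    rw [union_biUnion, mem_union]
    by_cases hiS : i ∈ S.biUnion col
    · exact .inl hiS
    · exact .inr (mem_biUnion.2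
        ⟨g i, mem_image_of_mem g (mem_sdiff.2 ⟨hi, hiS⟩), hg i hi⟩)
  exact h j (S ∪ T) (by simp only [mem_union, hS, hjT, or_self, not_false_eq_true]) hcard hcover

lemma lt_card_of_not_isolatedCol (h : Disjunct d col) (hj : ¬ IsolatedCol col j) :
    d < #(col j) := by
  simpa using h.lt_card_add_card_sdiff_biUnion hj (notMem_empty j)

lemma add_card_inter_le_card (h : Disjunct d col) (hj : ¬ IsolatedCol col j) {k : ι}
    (hjk : j ≠ k) : d + #(col j ∩ col k) ≤ #(col j) := by
  have hsdiff : d < 1 + #(col j \ col k) := by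
    simpa using h.lt_card_add_card_sdiff_biUnion hj (notMem_singleton.2 hjk)
  have := card_sdiff_add_card_inter (col j) (col k)
  omega

end Disjunct

section IsolatedCols

variable {ι ρ : Type*}

open Classical in
/-- The set of isolated columns, as a `Finset` so that it can be counted. -/
noncomputable def isolatedCols [Fintype ι] (col : ι → Finset ρ) : Finset ι :=
  {j | IsolatedCol col j}

open Classical in
/-- The private rows: those lying in exactly one column. They witness that columns are isolated. -/
noncomputable def privateRows [Fintype ρ] (col : ι → Finset ρ) : Finset ρ :=
  {i | ∃! j, i ∈ col j}

lemma mem_isolatedCols [Fintype ι] {col : ι → Finset ρ} {j : ι} :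
    j ∈ isolatedCols col ↔ IsolatedCol col j := by
  simp only [isolatedCols, mem_filter_univ]

lemma mem_privateRows [Fintype ρ] {col : ι → Finset ρ} {i : ρ} :
    i ∈ privateRows col ↔ ∃! j, i ∈ col j := by
  simp only [privateRows, mem_filter_univ]

lemma isolatedCol_iff_exists_mem_privateRows [Fintype ρ] {col : ι → Finset ρ} {j : ι} :
    IsolatedCol col j ↔ ∃ i ∈ privateRows col, i ∈ col j := by
  simp only [IsolatedCol, mem_privateRows]
  constructor
  · rintro ⟨i, hij, hi⟩
    exact ⟨i, ⟨j, hij, hi⟩, hij⟩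
  · rintro ⟨i, hi, hij⟩
    exact ⟨i, hij, fun _ hik ↦ hi.unique hik hij⟩

lemma card_isolatedCols_le_card_privateRows [Fintype ι] [Fintype ρ] (col : ι → Finset ρ) :
    #(isolatedCols col) ≤ #(privateRows col) := by
  refine card_le_card_of_forall_subsingleton (fun j i ↦ i ∈ col j)
    (fun j hj ↦ isolatedCol_iff_exists_mem_privateRows.1 (mem_isolatedCols.1 hj)) ?_
  rintro i hi j ⟨-, hij⟩ k ⟨-, hik⟩
  exact (mem_privateRows.1 hi).unique hij hik

lemma card_compl_privateRows_lt_card_compl_isolatedCols [Fintype ι] [Fintype ρ] [DecidableEq ι]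
    [DecidableEq ρ] (col : ι → Finset ρ) (hcard : Fintype.card ρ < Fintype.card ι) :
    #(privateRows col)ᶜ < #(isolatedCols col)ᶜ := by
  have hle := card_isolatedCols_le_card_privateRows col
  have hrows := card_add_card_compl (privateRows col)
  have hcols := card_add_card_compl (isolatedCols col)
  omega

lemma subset_compl_privateRows [Fintype ρ] [DecidableEq ρ] {col : ι → Finset ρ} {j : ι}
    (hj : ¬ IsolatedCol col j) : col j ⊆ (privateRows col)ᶜ := fun _ hij ↦
  mem_compl.2 fun hi ↦ hj (isolatedCol_iff_exists_mem_privateRows.2 ⟨_, hi, hij⟩)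

end IsolatedCols

section SetFamilies

variable {ι ρ : Type*} [DecidableEq ρ] {k : ℕ} {col : ι → Finset ρ}

lemma exists_lt_card_filter_mem {J : Finset ι} {R : Finset ρ} (hk : 0 < k)
    (hsub : ∀ j ∈ J, col j ⊆ R) (hcol : ∀ j ∈ J, k ≤ #(col j)) (hRJ : #R < #J) :
    ∃ r ∈ R, k < #{j ∈ J | r ∈ col j} := by
  by_contra! hle
  have hcount : #J * k ≤ #R * k := by
    refine card_mul_le_card_mul (fun j i ↦ i ∈ col j) (fun j hj ↦ ?_) hle
    rw [bipartiteAbove, filter_mem_eq_inter, inter_eq_right.2 (hsub j hj)]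
    exact hcol j hj
  exact hRJ.not_ge (Nat.le_of_mul_le_mul_right hcount hk)

lemma card_mul_le_card_erase_biUnion {K : Finset ι} {r : ρ} (hr : ∀ j ∈ K, r ∈ col j)
    (hcol : ∀ j ∈ K, k < #(col j))
    (hinter : (K : Set ι).Pairwise fun a b ↦ #(col a ∩ col b) ≤ 1) :
    #K * k ≤ #((K.biUnion col).erase r) := by
  have hdisj : (K : Set ι).PairwiseDisjoint fun j ↦ (col j).erase r := by
    intro a ha b hb hab
    refine disjoint_left.2 fun i hia hib ↦ ne_of_mem_erase hia ?_
    exact card_le_one.1 (hinter ha hb hab) i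
      (mem_inter.2 ⟨mem_of_mem_erase hia, mem_of_mem_erase hib⟩) r
      (mem_inter.2 ⟨hr a ha, hr b hb⟩)
  rw [erase_biUnion, card_biUnion hdisj, ← smul_eq_mul]
  refine card_nsmul_le_sum _ _ _ fun j hj ↦ ?_
  rw [card_erase_of_mem (hr j hj)]
  exact Nat.le_sub_one_of_lt (hcol j hj)

end SetFamilies

theorem disjunct_constant_weight_bound_general {ι ρ : Type*} [Fintype ι] [Fintype ρ]
    [DecidableEq ρ] {d : ℕ} {col : ι → Finset ρ} (hcard : Fintype.card ρ < Fintype.card ι)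
    (hdis : Disjunct d col) (hw : ∀ j, #(col j) ≤ d + 1) :
    (d + 1) ^ 2 ≤ Fintype.card ρ := by
  classical
  have hiso : ∀ j ∈ (isolatedCols col)ᶜ, ¬ IsolatedCol col j := fun j hj ↦
    mt mem_isolatedCols.2 (mem_compl.1 hj)
  have hlt : ∀ j ∈ (isolatedCols col)ᶜ, d < #(col j) := fun j hj ↦
    hdis.lt_card_of_not_isolatedCol (hiso j hj)
  obtain ⟨r, -, hr⟩ := exists_lt_card_filter_mem d.succ_pos
    (fun j hj ↦ subset_compl_privateRows (hiso j hj)) hlt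
    (card_compl_privateRows_lt_card_compl_isolatedCols col hcard)
  set K := {j ∈ (isolatedCols col)ᶜ | r ∈ col j}
  have hK : ∀ j ∈ K, j ∈ (isolatedCols col)ᶜ ∧ r ∈ col j := fun j ↦ mem_filter.1
  have hinter : (K : Set ι).Pairwise fun a b ↦ #(col a ∩ col b) ≤ 1 := fun a ha b _ hab ↦
    Nat.le_of_add_le_add_left ((hdis.add_card_inter_le_card (hiso a (hK a ha).1) hab).trans (hw a))
  calc (d + 1) ^ 2 = (d + 2) * d + 1 := by ring
    _ ≤ #K * d + 1 := by gcongr; exact hr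
    _ ≤ #((K.biUnion col).erase r) + 1 := by
      gcongr
      exact card_mul_le_card_erase_biUnion (fun j hj ↦ (hK j hj).2)
        (fun j hj ↦ hlt j (hK j hj).1) hinter
    _ ≤ Fintype.card ρ := card_lt_univ_of_notMem (notMem_erase r _)

/-- If a `t × n` `d`-disjunct binary matrix with `n > t` has all columns of
weight exactly `d + 1`, then `t ≥ (d+1)²`. -/
theorem disjunct_constant_weight_bound
    (d t n : ℕ) (hd : 1 ≤ d) (hn : n > t)
    (col : Fin n → Finset (Fin t))
    (hdis : Disjunct d col)
    (hw : ∀ j, (col j).card = d + 1) :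
    t ≥ (d + 1) ^ 2 := by
  simpa using disjunct_constant_weight_bound_general (by simpa using hn) hdis fun j ↦ (hw j).le
end

section
/- Let d ≥ 1 and let M be a t×n binary matrix with n > t that is d-disjunct and that has an isolated column. Then t > T(d), where T(d) denotes the minimal number of rows t' such that there exists a t'×n' d-disjunct binary matrix with n' > t'. -/
open Finset

/-- `Tmin d` is the minimal number of rows `t'` such that there exists a
`t' × n'` `d`-disjunct binary matrix with `n' > t'`. -/
noncomputable def Tmin (d : ℕ) : ℕ :=
  sInf {t' : ℕ | ∃ n' : ℕ, n' > t' ∧ ∃ col : Fin n' → Finset (Fin t'), Disjunct d col}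

/-! An isolated row `i` of a column `j` meets no other column, so deleting `i` together with `j`
leaves all remaining columns intact up to the deleted zero entries. The smaller matrix is therefore
still `d`-disjunct, and it has more columns than rows because both counts dropped by one. -/

section Submatrix

variable {ι ι' ρ ρ' : Type*}

/-- The submatrix of a binary matrix, given as a family of columns, with the columns selected by `f`
and the rows selected by `g`. Maps from arbitrary index types cover both deletion and
relabelling; `g` is injective to keep the columns finite. -/
noncomputable def columnSubmatrix (col : ι → Finset ρ) (f : ι' → ι) (g : ρ' ↪ ρ) :
    ι' → Finset ρ' :=
  fun k ↦ (col (f k)).preimage g g.injective.injOn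

@[simp]
theorem mem_columnSubmatrix {col : ι → Finset ρ} {f : ι' → ι} {g : ρ' ↪ ρ} {k : ι'} {r : ρ'} :
    r ∈ columnSubmatrix col f g k ↔ g r ∈ col (f k) :=
  mem_preimage

namespace Disjunct

variable [DecidableEq ρ] {d : ℕ} {col : ι → Finset ρ}

protected theorem columnSubmatrix [DecidableEq ρ'] (h : Disjunct d col) (f : ι' ↪ ι)
    (g : ρ' ↪ ρ) (hg : ∀ k, (col (f k) : Set ρ) ⊆ Set.range g) :
    Disjunct d (columnSubmatrix col f g) := by
  intro k S hk hS hsub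
  refine h (f k) (S.map f) (by simpa using hk) (by simpa using hS) fun x hx ↦ ?_
  obtain ⟨r, rfl⟩ := hg k hx
  obtain ⟨l, hl, hr⟩ := mem_biUnion.1 (hsub (mem_columnSubmatrix.2 hx))
  exact mem_biUnion.2 ⟨f l, mem_map_of_mem f hl, mem_columnSubmatrix.1 hr⟩

theorem delete_row_column (h : Disjunct d col) {i : ρ} {j : ι} (hi : ∀ k, i ∈ col k → k = j) :
    Disjunct d (columnSubmatrix col (Subtype.val : {k // k ≠ j} → ι) (.subtype (· ≠ i))) := by
  refine h.columnSubmatrix (.subtype (· ≠ j)) _ fun k r hr ↦ ⟨⟨r, ?_⟩, rfl⟩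
  rintro rfl
  exact k.2 (hi k hr)

theorem tmin_le_card [Fintype ι] [Fintype ρ] (h : Disjunct d col)
    (hcard : Fintype.card ρ < Fintype.card ι) : Tmin d ≤ Fintype.card ρ :=
  Nat.sInf_le ⟨Fintype.card ι, hcard, _,
    h.columnSubmatrix (Fintype.equivFin ι).symm.toEmbedding (Fintype.equivFin ρ).symm.toEmbedding
      fun _ r _ ↦ (Fintype.equivFin ρ).symm.surjective r⟩

end Disjunct

end Submatrix

/-- A `t × n` `d`-disjunct matrix with `n > t` having an isolated column
satisfies `t > T(d)`. -/
theorem isolated_column_strict_bound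
    (d t n : ℕ) (hd : 1 ≤ d) (hn : n > t)
    (col : Fin n → Finset (Fin t))
    (hdis : Disjunct d col)
    (hiso : ∃ j, IsolatedCol col j) :
    t > Tmin d := by
  obtain ⟨j, i, -, hi⟩ := hiso
  have ht : 0 < t := i.pos
  have hrows : Fintype.card {r : Fin t // r ≠ i} = t - 1 := by simp
  have hcols : Fintype.card {k : Fin n // k ≠ j} = n - 1 := by simp
  have hle : Tmin d ≤ Fintype.card {r : Fin t // r ≠ i} :=
    (hdis.delete_row_column hi).tmin_le_card (by omega)
  omega
end

section
/- Let d ≥ 1 and let M be a t×n binary matrix with n > t that is d-disjunct and that has an isolated column c containing exactly r_c ≥ 1 isolated rows. Then t ≥ T(d) + r_c, where T(d) denotes the minimal number of rows t' such that there exists a t'×n' d-disjunct binary matrix with n' > t'. -/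
open Finset

/-! Delete a set `C` of columns together with a set `R` of rows that meet no column outside `C`. The
surviving columns are unchanged as sets, so the smaller matrix is still `d`-disjunct. For `C = {c}`
and `R` the `rc ≥ 1` isolated rows of `c` it still has more columns than rows, whence
`Tmin d ≤ t - rc`. -/

section Disjunct

variable {ι κ ρ σ : Type*} [DecidableEq ρ] {d : ℕ} {col : ι → Finset ρ}

theorem Disjunct.comp_injective (h : Disjunct d col) {f : κ → ι} (hf : f.Injective) :
    Disjunct d (col ∘ f) := by
  classical
  intro k S hk hS hsub
  refine h (f k) (S.image f) ?_ (card_image_le.trans hS) ?_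
  · rwa [hf.mem_finset_image]
  · rwa [image_biUnion]

theorem disjunct_map_iff [DecidableEq σ] (e : ρ ↪ σ) :
    Disjunct d (fun j => (col j).map e) ↔ Disjunct d col := by
  have map_union (S : Finset ι) : (S.biUnion fun j => (col j).map e) = (S.biUnion col).map e := by
    simp only [map_eq_image, biUnion_image]
  simp only [Disjunct, map_union, map_subset_map]

theorem Disjunct.subtype_notMem (h : Disjunct d col) {C : Finset ι} {R : Finset ρ}
    (hR : ∀ i ∈ R, ∀ j, i ∈ col j → j ∈ C) :
    Disjunct d fun j : {j // j ∉ C} => (col j).subtype (· ∉ R) := by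
  have map_subtype (j : {j // j ∉ C}) :
      ((col j).subtype (· ∉ R)).map (Function.Embedding.subtype _) = col j :=
    subtype_map_of_mem fun i hij hi => j.2 (hR i hi j hij)
  rw [← disjunct_map_iff (Function.Embedding.subtype _)]
  simpa only [map_subtype, Function.comp_def] using h.comp_injective Subtype.val_injective

theorem Tmin_le_card [Fintype ι] [Fintype ρ] (h : Disjunct d col)
    (hcard : Fintype.card ρ < Fintype.card ι) : Tmin d ≤ Fintype.card ρ :=
  Nat.sInf_le ⟨Fintype.card ι, hcard, _,
    (disjunct_map_iff (Fintype.equivFin ρ).toEmbedding).2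
      (h.comp_injective (Fintype.equivFin ι).symm.injective)⟩

theorem isolated_column_quantitative_bound_general [Fintype ι] [Fintype ρ] (h : Disjunct d col)
    {C : Finset ι} {R : Finset ρ} (hR : ∀ i ∈ R, ∀ j, i ∈ col j → j ∈ C)
    (hcard : Fintype.card ρ + #C < Fintype.card ι + #R) : Tmin d + #R ≤ Fintype.card ρ := by
  classical
  have card_rows : Fintype.card {i // i ∉ R} = Fintype.card ρ - #R := by simp
  have card_cols : Fintype.card {j // j ∉ C} = Fintype.card ι - #C := by simp
  have hRρ : #R ≤ Fintype.card ρ := card_le_univ R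
  have hT : Tmin d ≤ Fintype.card {i // i ∉ R} := Tmin_le_card (h.subtype_notMem hR) (by omega)
  omega

end Disjunct

/-- A `t × n` `d`-disjunct matrix with `n > t` having an isolated column `c`
containing exactly `rc ≥ 1` isolated rows satisfies `t ≥ T(d) + rc`. -/
theorem isolated_column_quantitative_bound
    (d t n : ℕ) (hd : 1 ≤ d) (hn : n > t)
    (col : Fin n → Finset (Fin t))
    (hdis : Disjunct d col)
    (c : Fin n) (rc : ℕ) (hrc : 1 ≤ rc)
    (hcount : ((col c).filter (fun i => ∀ j', i ∈ col j' → j' = c)).card = rc) :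
    t ≥ Tmin d + rc := by
  subst hcount
  exact le_of_le_of_eq (isolated_column_quantitative_bound_general hdis (C := {c})
    (by simp +contextual) (by simp only [Fintype.card_fin, card_singleton]; omega))
    (Fintype.card_fin t)
end

section
/- Let K be a set of k elements and let G be a family of 2-element subsets of K whose matching number satisfies v(G) ≤ μ, where k ≥ 2μ+1. Then |G| ≤ max{ C(2μ+1, 2), C(k, 2) − C(k−μ, 2) }, where C(a,b) denotes the binomial coefficient. -/
open Finset

/-!
Fix a linear order on the vertices. Replacing `j` by a smaller `i` in the edges that contain `j` but
not `i`, whenever the resulting pair is not yet an edge, preserves the number of edges and does not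
increase the matching number, so the family may be assumed to be stable under all these shifts.

When `k ≤ 2μ + 1`, the first term of the maximum already counts all pairs of vertices. Otherwise the
pairs `{s, 2μ + 1 - s}` with `s ≤ μ` are `μ + 1` disjoint pairs in `{0, …, k - 1}`, so one of them
is not an edge. By stability every edge then has an endpoint below `s` or lies inside
`[s, 2μ + 1 - s)`. The number of such pairs is a convex function of `s ∈ [0, μ]`, and its values at
the two ends of this interval are the two terms of the maximum.
-/

open scoped FinsetFamily

section Matching

variable {α β : Type*} {𝒜 : Finset (Finset α)} {μ : ℕ}

/-- The matching number of `𝒜` is at most `μ`: any subfamily of pairwise disjoint members of `𝒜`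
has at most `μ` members. The bound is encoded as a predicate so that no maximum has to be taken. -/
def MatchingNumberLE (𝒜 : Finset (Finset α)) (μ : ℕ) : Prop :=
  ∀ M ⊆ 𝒜, (M : Set (Finset α)).PairwiseDisjoint id → #M ≤ μ

theorem pairwiseDisjoint_map_mapEmbedding {M : Finset (Finset α)} (f : α ↪ β) :
    (M.map (mapEmbedding f).toEmbedding : Set (Finset β)).PairwiseDisjoint id ↔
      (M : Set (Finset α)).PairwiseDisjoint id := by
  simp [Set.PairwiseDisjoint, Set.Pairwise, Function.onFun]

theorem matchingNumberLE_map_mapEmbedding (f : α ↪ β) :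
    MatchingNumberLE (𝒜.map (mapEmbedding f).toEmbedding) μ ↔ MatchingNumberLE 𝒜 μ := by
  refine ⟨fun h M hM hdisj ↦ ?_, fun h M hM hdisj ↦ ?_⟩
  · simpa using h _ (map_subset_map.2 hM) ((pairwiseDisjoint_map_mapEmbedding f).2 hdisj)
  · obtain ⟨N, hN, rfl⟩ := subset_map_iff.1 hM
    simpa using h N hN ((pairwiseDisjoint_map_mapEmbedding f).1 hdisj)

theorem sized_map_mapEmbedding {r : ℕ} (f : α ↪ β) :
    (𝒜.map (mapEmbedding f).toEmbedding : Set (Finset β)).Sized r ↔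
      (𝒜 : Set (Finset α)).Sized r := by
  simp [Set.Sized]

theorem MatchingNumberLE.card_le {ι : Type*} [Fintype ι] (h : MatchingNumberLE 𝒜 μ)
    {f : ι → Finset α} (hmem : ∀ i, f i ∈ 𝒜) (hne : ∀ i, (f i).Nonempty)
    (hdisj : Pairwise (Function.onFun Disjoint f)) : Fintype.card ι ≤ μ := by
  have hinj : Function.Injective f := fun i j hij ↦
    by_contra fun hne_ij ↦ (hdisj hne_ij).ne (hne i).ne_empty hij
  have hM := h (univ.map ⟨f, hinj⟩) (by simpa [subset_iff] using hmem)
    (by simpa using! hdisj.range_pairwise)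
  simpa using hM

end Matching

section Compression

variable {α : Type*} [DecidableEq α] {𝒜 : Finset (Finset α)} {s : Finset α} {i j : α} {μ : ℕ}

theorem map_swap_of_notMem_of_notMem (hi : i ∉ s) (hj : j ∉ s) :
    s.map (Equiv.swap i j).toEmbedding = s := by
  ext x
  simp only [mem_map_equiv, Equiv.symm_swap, Equiv.swap_apply_def]
  grind

theorem map_swap_of_notMem_of_mem (hi : i ∉ s) (hj : j ∈ s) :
    s.map (Equiv.swap i j).toEmbedding = (s ⊔ {i}) \ {j} := by
  ext x
  simp only [mem_map_equiv, Equiv.symm_swap, Equiv.swap_apply_def, sup_eq_union]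
  grind

theorem map_swap_mem_of_mem_compression (hs : s ∈ 𝓒 {i} {j} 𝒜) (hi : i ∉ s) (hj : j ∈ s) :
    s.map (Equiv.swap i j).toEmbedding ∈ 𝒜 := by
  rw [map_swap_of_notMem_of_mem hi hj]
  exact UV.sup_sdiff_mem_of_mem_compression hs (singleton_subset_iff.2 hj)
    (disjoint_singleton_left.2 hi)

theorem map_swap_mem_of_mem_compression_of_notMem (hs : s ∈ 𝓒 {i} {j} 𝒜) (hs' : s ∉ 𝒜) :
    s.map (Equiv.swap i j).toEmbedding ∈ 𝒜 := by
  have hi : i ∈ s := singleton_subset_iff.1 (UV.le_of_mem_compression_of_notMem hs hs')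
  have hj : j ∉ s := disjoint_singleton_left.1 (UV.disjoint_of_mem_compression_of_notMem hs hs')
  rw [Equiv.swap_comm, map_swap_of_notMem_of_mem hj hi]
  exact UV.sup_sdiff_mem_of_mem_compression_of_notMem hs hs'

/-- If a matching of the compressed family has a member `e ∉ 𝒜`, then `e` is its only member
containing `i`, and swapping `i` and `j` throughout turns it into a matching of `𝒜`. -/
theorem MatchingNumberLE.compression (h : MatchingNumberLE 𝒜 μ) (i j : α) :
    MatchingNumberLE (𝓒 {i} {j} 𝒜) μ := by
  intro M hM hdisj
  by_cases hM𝒜 : M ⊆ 𝒜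
  · exact h M hM𝒜 hdisj
  obtain ⟨e, heM, he⟩ := not_subset.1 hM𝒜
  have hie : i ∈ e := singleton_subset_iff.1 (UV.le_of_mem_compression_of_notMem (hM heM) he)
  have hswap : M.map (mapEmbedding (Equiv.swap i j).toEmbedding).toEmbedding ⊆ 𝒜 := by
    simp only [subset_iff, mem_map, forall_exists_index, and_imp, forall_apply_eq_imp_iff₂]
    intro m hm
    by_cases hm𝒜 : m ∈ 𝒜
    · have him : i ∉ m :=
        fun him ↦ disjoint_left.1 (hdisj hm heM (ne_of_mem_of_not_mem hm𝒜 he)) him hie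
      by_cases hjm : j ∈ m
      · exact map_swap_mem_of_mem_compression (hM hm) him hjm
      · simpa [map_swap_of_notMem_of_notMem him hjm] using hm𝒜
    · exact map_swap_mem_of_mem_compression_of_notMem (hM hm) hm𝒜
  simpa using h _ hswap ((pairwiseDisjoint_map_mapEmbedding _).2 hdisj)

end Compression

section Shifted

variable {α : Type*} [LinearOrder α] {𝒜 : Finset (Finset α)} {i j a b c d p q : α}

/-- A family is shifted if replacing an element `j` of a member by a smaller `i` outside of that
member never leaves the family, i.e. if it is fixed by the compressions `𝓒 {i} {j}` with `i < j`. -/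
def IsShifted (𝒜 : Finset (Finset α)) : Prop :=
  ∀ ⦃i j⦄, i < j → UV.IsCompressed {i} {j} 𝒜

theorem toColex_image_toColex_compression_le (hij : i < j) (𝒜 : Finset (Finset α)) :
    toColex ((𝓒 {i} {j} 𝒜).image toColex) ≤ toColex (𝒜.image toColex) := by
  rw [Colex.toColex_le_toColex]
  simp only [toColex.surjective.forall, toColex.surjective.exists,
    toColex.injective.mem_finset_image]
  intro s hs hs𝒜
  obtain ⟨hs', -⟩ | ⟨-, t, ht, rfl⟩ := UV.mem_compression.1 hs
  · exact absurd hs' hs𝒜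
  have hlt : toColex (UV.compress {i} {j} t) < toColex t :=
    UV.toColex_compress_lt_toColex (hU := singleton_nonempty i) (hV := singleton_nonempty j)
      (by simpa using hij) (ne_of_mem_of_not_mem ht hs𝒜).symm
  have ht' : t ∉ 𝓒 {i} {j} 𝒜 := by
    rw [UV.mem_compression]
    tauto
  exact ⟨t, ht, ht', hlt.le⟩

theorem exists_isShifted [Finite α] {P : Finset (Finset α) → Prop}
    (hP : ∀ ⦃i j ℬ⦄, i < j → P ℬ → P (𝓒 {i} {j} ℬ)) (h𝒜 : P 𝒜) : ∃ ℬ, P ℬ ∧ IsShifted ℬ := by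
  obtain ⟨ℬ, hℬ, hmin⟩ := (Set.toFinite {ℬ | P ℬ}).exists_minimalFor
    (fun ℬ ↦ toColex (ℬ.image toColex)) _ ⟨𝒜, h𝒜⟩
  refine ⟨ℬ, hℬ, fun i j hij ↦ ?_⟩
  have hle := toColex_image_toColex_compression_le hij ℬ
  exact image_injective toColex.injective
    (toColex.injective (hle.antisymm (hmin (hP hij hℬ) hle)))

theorem IsShifted.pair_mem_of_le_left (h : IsShifted 𝒜) (hca : c ≤ a) (hcb : c ≠ b) (hab : a ≠ b)
    (hmem : {a, b} ∈ 𝒜) : {c, b} ∈ 𝒜 := by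
  obtain rfl | hca := hca.eq_or_lt
  · exact hmem
  rw [← (h hca).eq] at hmem
  have hmem' := map_swap_mem_of_mem_compression hmem (by simp [hca.ne, hcb]) (by simp)
  simpa [Equiv.swap_apply_of_ne_of_ne hcb.symm hab.symm] using hmem'

theorem IsShifted.pair_mem_of_le (h : IsShifted 𝒜) (hcd : c < d) (hab : a < b) (hca : c ≤ a)
    (hdb : d ≤ b) (hmem : {a, b} ∈ 𝒜) : {c, d} ∈ 𝒜 := by
  have hcb : {c, b} ∈ 𝒜 := h.pair_mem_of_le_left hca (hca.trans_lt hab).ne hab.ne hmem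
  rw [pair_comm] at hcb ⊢
  exact h.pair_mem_of_le_left hdb hcd.ne' (hca.trans_lt hab).ne' hcb

theorem IsShifted.exists_lt_or_subset_Ico [LocallyFiniteOrder α] (h : IsShifted 𝒜)
    (h2 : (𝒜 : Set (Finset α)).Sized 2) (hpq : p < q) (hnotMem : {p, q} ∉ 𝒜) {e : Finset α}
    (he : e ∈ 𝒜) : (∃ x ∈ e, x < p) ∨ e ⊆ Ico p q := by
  obtain ⟨a, b, hab, rfl⟩ : ∃ a b, a < b ∧ e = {a, b} := by
    obtain ⟨x, y, hxy, rfl⟩ := card_eq_two.1 (h2 he)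
    obtain hlt | hlt := hxy.lt_or_gt
    exacts [⟨x, y, hlt, rfl⟩, ⟨y, x, hlt, pair_comm x y⟩]
  by_cases hap : a < p
  · exact .inl ⟨a, by simp, hap⟩
  have hbq : b < q := by
    contrapose! hnotMem
    exact h.pair_mem_of_le hpq hab (not_lt.1 hap) hnotMem he
  right
  grind

theorem IsShifted.card_le_of_pair_notMem [Fintype α] [LocallyFiniteOrder α]
    [LocallyFiniteOrderTop α] (h : IsShifted 𝒜) (h2 : (𝒜 : Set (Finset α)).Sized 2)
    (hpq : p < q) (hnotMem : {p, q} ∉ 𝒜) :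
    #𝒜 ≤ (Fintype.card α).choose 2 - (#(Ici p)).choose 2 + (#(Ico p q)).choose 2 := by
  have hsub : 𝒜 ⊆ powersetCard 2 univ \ powersetCard 2 (Ici p) ∪ powersetCard 2 (Ico p q) := by
    intro e he
    simp only [mem_union, mem_sdiff, mem_powersetCard, subset_univ, h2 he, and_true, true_and]
    refine (h.exists_lt_or_subset_Ico h2 hpq hnotMem he).imp_left ?_
    rintro ⟨x, hxe, hxp⟩ hIci
    exact hxp.not_ge (mem_Ici.1 (hIci hxe))
  calc
    #𝒜 ≤ #(powersetCard 2 univ \ powersetCard 2 (Ici p)) + #(powersetCard 2 (Ico p q)) :=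
      (card_le_card hsub).trans (card_union_le _ _)
    _ = _ := by
      rw [card_sdiff_of_subset (powersetCard_mono (subset_univ _))]
      simp only [card_powersetCard, card_univ]

end Shifted

theorem MatchingNumberLE.exists_pair_notMem {n μ : ℕ} {𝒜 : Finset (Finset (Fin n))}
    (h : MatchingNumberLE 𝒜 μ) (hn : 2 * μ + 1 < n) :
    ∃ p q : Fin n, (p : ℕ) ≤ μ ∧ (p + q : ℕ) = 2 * μ + 1 ∧ {p, q} ∉ 𝒜 := by
  by_contra! hall
  let f (s : Fin (μ + 1)) : Finset (Fin n) := {⟨s, by lia⟩, ⟨2 * μ + 1 - s, by lia⟩}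
  have hmem (s) : f s ∈ 𝒜 := hall _ _ (Nat.lt_succ_iff.1 s.2) (Nat.add_sub_of_le (by lia))
  have hdisj : Pairwise (Function.onFun Disjoint f) := by
    intro s t hst
    simp only [Function.onFun, f, disjoint_insert_right, disjoint_singleton_right, mem_insert,
      mem_singleton, Fin.mk.injEq, not_or]
    lia
  simpa using h.card_le hmem (fun s ↦ by simp [f]) hdisj

section Counting

variable {k μ s : ℕ}

/-- The number of pairs in a `k`-set that meet a fixed `s`-subset or lie in a fixed set of
`2(μ - s) + 1` further elements; this bounds the size of a shifted graph with matching number `μ`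
from which the pair `{s, 2μ + 1 - s}` is missing. -/
def starCliqueCount (k μ s : ℕ) : ℕ :=
  k.choose 2 - (k - s).choose 2 + (2 * (μ - s) + 1).choose 2

theorem starCliqueCount_zero : starCliqueCount k μ 0 = (2 * μ + 1).choose 2 := by
  simp [starCliqueCount]

theorem starCliqueCount_self : starCliqueCount k μ μ = k.choose 2 - (k - μ).choose 2 := by
  simp [starCliqueCount]

theorem cast_starCliqueCount (hs : s ≤ μ) (hμ : μ ≤ k) :
    (starCliqueCount k μ s : ℚ) =
      3 / 2 * (s : ℚ) ^ 2 + (k - 3 / 2 - 4 * μ) * s + μ * (2 * μ + 1) := by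
  have hchoose : (k - s).choose 2 ≤ k.choose 2 := Nat.choose_le_choose _ (Nat.sub_le k s)
  rw [starCliqueCount]
  push_cast [Nat.cast_choose_two, hchoose, hs, hs.trans hμ]
  ring

theorem convexOn_quadratic {𝕜 : Type*} [Field 𝕜] [LinearOrder 𝕜] [IsStrictOrderedRing 𝕜] {a : 𝕜}
    (ha : 0 ≤ a) (b c : 𝕜) : ConvexOn 𝕜 Set.univ fun x : 𝕜 ↦ a * x ^ 2 + b * x + c :=
  ((even_two.convexOn_pow.smul ha).add
    ((LinearMap.mulLeft 𝕜 b).convexOn convex_univ)).add_const c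

theorem starCliqueCount_le_max (hs : s ≤ μ) (hμ : μ ≤ k) :
    starCliqueCount k μ s ≤ max (starCliqueCount k μ 0) (starCliqueCount k μ μ) := by
  have hconvex := convexOn_quadratic (𝕜 := ℚ) (a := 3 / 2) (by norm_num)
    (k - 3 / 2 - 4 * μ) (μ * (2 * μ + 1))
  have hmax := hconvex.le_max_of_mem_Icc (x := ((0 : ℕ) : ℚ)) (y := μ) (z := s)
    (Set.mem_univ _) (Set.mem_univ _) ⟨by simp, by simpa using hs⟩
  simp only [← cast_starCliqueCount (Nat.zero_le μ) hμ, ← cast_starCliqueCount le_rfl hμ,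
    ← cast_starCliqueCount hs hμ] at hmax
  exact_mod_cast hmax

end Counting

theorem IsShifted.card_le_max {n μ : ℕ} {𝒜 : Finset (Finset (Fin n))} (h : IsShifted 𝒜)
    (h2 : (𝒜 : Set (Finset (Fin n))).Sized 2) (hμ : MatchingNumberLE 𝒜 μ) (hn : 2 * μ + 1 < n) :
    #𝒜 ≤ max ((2 * μ + 1).choose 2) (n.choose 2 - (n - μ).choose 2) := by
  obtain ⟨p, q, hpμ, hpq, hnotMem⟩ := hμ.exists_pair_notMem hn
  have hlt : p < q := by lia
  have hIco : (q - p : ℕ) = 2 * (μ - p) + 1 := by lia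
  calc
    #𝒜 ≤ starCliqueCount n μ p := by
      simpa [starCliqueCount, hIco] using h.card_le_of_pair_notMem h2 hlt hnotMem
    _ ≤ max (starCliqueCount n μ 0) (starCliqueCount n μ μ) :=
      starCliqueCount_le_max hpμ (by lia)
    _ = _ := by rw [starCliqueCount_zero, starCliqueCount_self]

theorem MatchingNumberLE.card_le_max_of_fin {n μ : ℕ} {𝒜 : Finset (Finset (Fin n))}
    (hμ : MatchingNumberLE 𝒜 μ) (h2 : (𝒜 : Set (Finset (Fin n))).Sized 2) (hn : 2 * μ + 1 < n) :
    #𝒜 ≤ max ((2 * μ + 1).choose 2) (n.choose 2 - (n - μ).choose 2) := by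
  obtain ⟨ℬ, ⟨hcard, hℬ2, hℬμ⟩, hℬ⟩ := exists_isShifted (𝒜 := 𝒜)
    (P := fun ℬ ↦ #ℬ = #𝒜 ∧ (ℬ : Set (Finset (Fin n))).Sized 2 ∧ MatchingNumberLE ℬ μ)
    (fun i j ℬ _ ⟨hcard, hℬ2, hℬμ⟩ ↦
      ⟨(UV.card_compression _ _ _).trans hcard, hℬ2.uvCompression (by simp), hℬμ.compression i j⟩)
    ⟨rfl, h2, hμ⟩
  exact hcard ▸ hℬ.card_le_max hℬ2 hℬμ hn

theorem erdos_gallai_matching_bound_general {V : Type*} [Fintype V] {G : Finset (Finset V)} {μ : ℕ}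
    (h2 : (G : Set (Finset V)).Sized 2) (hμ : MatchingNumberLE G μ) :
    #G ≤ max ((2 * μ + 1).choose 2)
      ((Fintype.card V).choose 2 - (Fintype.card V - μ).choose 2) := by
  obtain hk | hk := le_or_gt (Fintype.card V) (2 * μ + 1)
  · exact h2.card_le.trans (le_max_of_le_left (Nat.choose_le_choose 2 hk))
  · let f : V ↪ Fin (Fintype.card V) := (Fintype.equivFin V).toEmbedding
    simpa using ((matchingNumberLE_map_mapEmbedding f).2 hμ).card_le_max_of_fin
      ((sized_map_mapEmbedding f).2 h2) hk

/-- Erdős–Gallai: a family `G` of 2-element subsets of a `k`-element set with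
matching number at most `μ`, where `k ≥ 2μ + 1`, has at most
`max (C(2μ+1, 2)) (C(k,2) − C(k−μ,2))` members. -/
theorem erdos_gallai_matching_bound
    (k μ : ℕ) (hk : k ≥ 2 * μ + 1)
    (G : Finset (Finset (Fin k)))
    (h2 : ∀ e ∈ G, e.card = 2)
    (hmatch : ∀ M ⊆ G, (M : Set (Finset (Fin k))).PairwiseDisjoint id → M.card ≤ μ) :
    G.card ≤ max (Nat.choose (2 * μ + 1) 2) (Nat.choose k 2 - Nat.choose (k - μ) 2) := by
  simpa using erdos_gallai_matching_bound_general h2 hmatch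
end

section
/- Let d ≥ 1, let M be a t×n binary matrix that is d-disjunct and has no isolated columns, and let c be a column of M with weight |c| = d+s where 1 ≤ s ≤ d−1. Then the family N(c) of non-private 2-subsets of c contains no s pairwise disjoint members, i.e., its matching number is at most s−1. -/
open Finset

/-!
Let `M` be a set of `m` disjoint non-private pairs of `c`. One other column covers each pair, and
one further column covers each remaining row of `c`, since that row is not isolated: its singleton
is non-private as well. So `|c| - m` columns other than `c` cover `c`, and disjunctness forces
`d < |c| - m`.
-/

/-- A set `e` of rows is non-private for the column `c` if a column other than `c` contains it.
The members of `N(c)` are the 2-element subsets of `col c` with this property. -/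
def NonPrivate {ι ρ : Type*} (col : ι → Finset ρ) (c : ι) (e : Finset ρ) : Prop :=
  ∃ j, j ≠ c ∧ e ⊆ col j

section

variable {ι ρ : Type*} {col : ι → Finset ρ} {c : ι} {d : ℕ}

theorem nonPrivate_singleton_of_not_isolatedCol (hc : ¬ IsolatedCol col c) {i : ρ}
    (hi : i ∈ col c) : NonPrivate col c {i} := by
  by_contra hpriv
  refine hc ⟨i, hi, fun j hij => ?_⟩
  by_contra hj
  exact hpriv ⟨j, hj, singleton_subset_iff.2 hij⟩

variable [DecidableEq ρ]

theorem Disjunct.lt_card_of_subset_biUnion (hdis : Disjunct d col) {P : Finset (Finset ρ)}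
    (hP : ∀ e ∈ P, NonPrivate col c e) (hcover : col c ⊆ P.biUnion id) : d < #P := by
  classical
  choose f hf_ne hf_sub using hP
  set S : Finset ι := P.attach.image fun e => f e.1 e.2
  have hcS : c ∉ S := by simp [S, hf_ne]
  have hS : #S ≤ #P := card_image_le.trans_eq card_attach
  have hPS : P.biUnion id ⊆ S.biUnion col := biUnion_subset.2 fun e he =>
    (hf_sub e he).trans <|
      subset_biUnion_of_mem col (mem_image.2 ⟨⟨e, he⟩, mem_attach P _, rfl⟩)
  by_contra! hd
  exact hdis c S hcS (hS.trans hd) (hcover.trans hPS)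

theorem Disjunct.add_sum_card_lt (hdis : Disjunct d col) (hc : ¬ IsolatedCol col c)
    {M : Finset (Finset ρ)} (hM : ∀ e ∈ M, e ⊆ col c) (hnp : ∀ e ∈ M, NonPrivate col c e)
    (hdisj : (M : Set (Finset ρ)).PairwiseDisjoint id) :
    d + ∑ e ∈ M, #e < #(col c) + #M := by
  set R : Finset ρ := col c \ M.biUnion id
  have hU : M.biUnion id ⊆ col c := biUnion_subset.2 hM
  have hU_card : #(M.biUnion id) = ∑ e ∈ M, #e := card_biUnion hdisj
  have hR_card : #R + #(M.biUnion id) = #(col c) := card_sdiff_add_card_eq_card hU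
  set P : Finset (Finset ρ) := M ∪ R.image singleton
  have hP_np : ∀ e ∈ P, NonPrivate col c e := by
    intro e he
    rcases mem_union.1 he with heM | heR
    · exact hnp e heM
    · obtain ⟨i, hi, rfl⟩ := mem_image.1 heR
      exact nonPrivate_singleton_of_not_isolatedCol hc (mem_sdiff.1 hi).1
  have hP_cover : col c ⊆ P.biUnion id := by
    rw [union_biUnion, image_biUnion]
    simp only [id_eq, biUnion_singleton_eq_self]
    exact (union_sdiff_of_subset hU).superset
  have hP_card : #P ≤ #M + #R :=
    (card_union_le _ _).trans (Nat.add_le_add_left card_image_le _)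
  have hd : d < #P := hdis.lt_card_of_subset_biUnion hP_np hP_cover
  omega

theorem nonprivate_pairs_matching_bound_general (hdis : Disjunct d col)
    (hc : ¬ IsolatedCol col c) {M : Finset (Finset ρ)} (hM : M ⊆ (col c).powersetCard 2)
    (hnp : ∀ e ∈ M, NonPrivate col c e)
    (hdisj : (M : Set (Finset ρ)).PairwiseDisjoint id) :
    d + #M < #(col c) := by
  have hpair : ∀ e ∈ M, e ⊆ col c ∧ #e = 2 := fun e he => mem_powersetCard.1 (hM he)
  have hsum : ∑ e ∈ M, #e = #M * 2 := sum_const_nat fun e he => (hpair e he).2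
  have hlt := hdis.add_sum_card_lt hc (fun e he => (hpair e he).1) hnp hdisj
  omega

end

/-- In a `d`-disjunct matrix with no isolated columns, for a column `c` of weight
`d + s` with `1 ≤ s ≤ d − 1`, the family `N(c)` of non-private 2-subsets of `c`
contains no `s` pairwise disjoint members (its matching number is at most `s − 1`). -/
theorem nonprivate_pairs_matching_bound
    (d s t n : ℕ) (hd : 1 ≤ d) (hs1 : 1 ≤ s) (hs2 : s ≤ d - 1)
    (col : Fin n → Finset (Fin t))
    (hdis : Disjunct d col)
    (hiso : ∀ j, ¬ IsolatedCol col j)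
    (c : Fin n) (hc : (col c).card = d + s) :
    ∀ M ⊆ ((col c).powersetCard 2).filter (fun e => ∃ j', j' ≠ c ∧ e ⊆ col j'),
      (M : Set (Finset (Fin t))).PairwiseDisjoint id → M.card ≤ s - 1 := by
  intro M hM hdisj
  have hlt : d + #M < #(col c) :=
    nonprivate_pairs_matching_bound_general hdis (hiso c) (hM.trans (filter_subset _ _))
      (fun e he => (mem_filter.1 (hM he)).2) hdisj
  omega
end

section
/- Let d ≥ 1 and let M be a t×n binary matrix that is d-disjunct, and let c be a column of M with weight w_c. Then the matrix obtained from M by deleting column c and all rows belonging to c is a (t−w_c)×(n−1) binary matrix that is (d−1)-disjunct. -/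
open Finset

/-! If columns of the reduced matrix cover a remaining column `j` there, then adjoining the deleted
column `c` gives a cover of `j` in the original matrix, since `c` accounts for every deleted row.
Thus a cover by `d - 1` columns after the deletion comes from a cover by `d` columns before it. -/

namespace Disjunct

variable {ι κ ρ : Type*} [DecidableEq ρ] {d : ℕ} {col : ι → Finset ρ}

theorem sdiff_biUnion (C : Finset ι) (h : Disjunct (d + #C) col) (f : κ ↪ ι)
    (hf : ∀ k, f k ∉ C) : Disjunct d fun k => col (f k) \ C.biUnion col := by
  classical
  intro k S hk hS hcover
  have hnotMem : f k ∉ C ∪ S.map f := by simp [hk, hf]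
  have hcard : #(C ∪ S.map f) ≤ d + #C := by
    grw [card_union_le, card_map, hS, add_comm]
  have hsdiff : col (f k) \ C.biUnion col ⊆ (S.map f).biUnion col := by
    rw [map_eq_image, image_biUnion]
    exact hcover.trans (biUnion_mono fun _ _ => sdiff_subset)
  refine h (f k) (C ∪ S.map f) hnotMem hcard ?_
  rw [union_biUnion]
  exact sdiff_le_iff.mp hsdiff

theorem subtype_iff_filter {p : ρ → Prop} [DecidablePred p] :
    Disjunct d (fun j => (col j).subtype p) ↔ Disjunct d fun j => (col j).filter p := by
  have hcover (j : ι) (S : Finset ι) :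
      (col j).subtype p ⊆ S.biUnion (fun k => (col k).subtype p) ↔
        (col j).filter p ⊆ S.biUnion fun k => (col k).filter p := by
    simp only [subset_iff, mem_subtype, mem_biUnion, Subtype.forall, mem_filter]
    grind
  simp only [Disjunct, hcover]

end Disjunct

theorem enatCard_subtype_notMem {α : Type*} (s : Finset α) :
    ENat.card {x // x ∉ s} = ENat.card α - #s := by
  have hcompl := Set.encard_sdiff (Set.subset_univ (s : Set α)) s.finite_toSet
  rwa [← Set.compl_eq_univ_sdiff, Set.encard_univ, Set.encard_coe_eq_coe_finsetCard] at hcompl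

theorem delete_column_disjunct_general {ι ρ : Type*} [DecidableEq ρ] {d : ℕ}
    {col : ι → Finset ρ} (h : Disjunct (d + 1) col) (c : ι) :
    Disjunct d (fun j : {j // j ≠ c} => (col j).subtype (· ∉ col c)) ∧
      ENat.card {i // i ∉ col c} = ENat.card ρ - #(col c) ∧
      ENat.card {j // j ≠ c} = ENat.card ι - 1 := by
  refine ⟨Disjunct.subtype_iff_filter.2 ?_, enatCard_subtype_notMem _, ?_⟩
  · simpa [sdiff_eq_filter] using
      Disjunct.sdiff_biUnion {c} h (.subtype (· ≠ c)) (by simp)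
  · simpa using enatCard_subtype_notMem {c}

/-- Deleting a column `c` of weight `w` from a `t × n` `d`-disjunct matrix,
together with all rows belonging to `c`, yields a `(t − w) × (n − 1)` matrix
that is `(d − 1)`-disjunct. -/
theorem delete_column_disjunct
    (d t n : ℕ) (hd : 1 ≤ d)
    (col : Fin n → Finset (Fin t))
    (hdis : Disjunct d col)
    (c : Fin n) (w : ℕ) (hw : (col c).card = w) :
    Disjunct (d - 1)
        (fun j : {j : Fin n // j ≠ c} => Finset.subtype (fun i => i ∉ col c) (col j.1)) ∧
      Fintype.card {i : Fin t // i ∉ col c} = t - w ∧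
      Fintype.card {j : Fin n // j ≠ c} = n - 1 := by
  have hgen := delete_column_disjunct_general (Nat.sub_add_cancel hd ▸ hdis) c
  simp only [ENat.card_eq_coe_fintype_card, Fintype.card_fin, hw] at hgen
  exact_mod_cast hgen
end

section
/- Let d ≥ 1, let M be a t×n binary matrix that is d-disjunct and has no isolated columns, and let c be a column of M with weight |c| = d+s where 1 ≤ s ≤ d−1 and d+s ≤ (5d+2)/3. Then the number of private 2-subsets of c satisfies |P(c)| ≥ C(d+1, 2), where C(a,b) denotes the binomial coefficient. -/
open Finset

/-!
The `2`-subsets of `c` that are not private form a graph on the `d + s` rows of `c`. A matching of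
this graph with `m` edges yields `(d + s) - m` columns other than `c` that cover `c`: one for each
matching edge and, as `c` is not isolated, one for each unmatched row. Disjunctness therefore forces
`m ≤ s - 1`. By the Erdős–Gallai matching theorem the graph has at most
`max (C(2s - 1, 2)) (C(s - 1, 2) + (s - 1)(d + 1))` edges, the condition on the weight of `c` makes
the second term the maximum, and `C(d + s, 2)` exceeds it by exactly `C(d + 1, 2)`.

The Erdős–Gallai theorem is proved by deleting vertices that lie in every maximum matching. When no
such vertex is left, Gallai's lemma shows that any two vertices missed by a maximum matching have
no common neighbour, which bounds the number of edges by `C(2k + 1, 2)` for matching number `k`.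
-/

open Equiv Equiv.Perm

variable {V ι ρ : Type*}

/-- A matching of `G`, encoded as the involution of the vertex set that exchanges the endpoints of
each matching edge and fixes every unmatched vertex. With this encoding the orbits of `N * M` play
the role of the alternating paths of two matchings `M` and `N`. -/
structure IsMatchingPerm (G : SimpleGraph V) (M : Perm V) : Prop where
  involutive : Function.Involutive M
  adj_apply : ∀ x, M x ≠ x → G.Adj x (M x)

namespace IsMatchingPerm

variable {G : SimpleGraph V} {M N : Perm V}

theorem one : IsMatchingPerm G 1 :=
  ⟨fun _ ↦ rfl, fun _ h ↦ absurd rfl h⟩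

theorem inv_eq_self (hM : IsMatchingPerm G M) : M⁻¹ = M :=
  Function.Involutive.symm_eq_self_of_involutive M hM.involutive

/-- The subgraph formed by the edges `s(x, M x)` with `M x ≠ x`. -/
def toSubgraph (hM : IsMatchingPerm G M) : G.Subgraph where
  verts := {x | M x ≠ x}
  Adj x y := M x ≠ x ∧ M x = y
  adj_sub := by rintro x _ ⟨hx, rfl⟩; exact hM.adj_apply x hx
  edge_vert h := h.1
  symm := ⟨by rintro x _ ⟨hx, rfl⟩; exact ⟨by simpa using hx, hM.involutive x⟩⟩

theorem isMatching_toSubgraph (hM : IsMatchingPerm G M) : hM.toSubgraph.IsMatching :=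
  fun x hx ↦ ⟨M x, ⟨hx, rfl⟩, fun _ h ↦ h.2.symm⟩

theorem ofSubtype {s : Set V} [DecidablePred (· ∈ s)] {M : Perm s}
    (hM : IsMatchingPerm (G.induce s) M) : IsMatchingPerm G (Perm.ofSubtype M) where
  involutive x := by
    by_cases hx : x ∈ s
    · simp [ofSubtype_apply_of_mem M hx, hM.involutive ⟨x, hx⟩]
    · simp [ofSubtype_apply_of_not_mem M hx]
  adj_apply x hne := by
    by_cases hx : x ∈ s
    · rw [ofSubtype_apply_of_mem M hx] at hne ⊢
      exact hM.adj_apply ⟨x, hx⟩ fun h ↦ hne (congrArg Subtype.val h)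
    · exact absurd (ofSubtype_apply_of_not_mem M hx) hne

theorem swap_mul [DecidableEq V] (hM : IsMatchingPerm G M) {x y : V} (hxy : G.Adj x y)
    (hx : M x = x) (hy : M y = y) : IsMatchingPerm G (swap x y * M) := by
  have apply_ne {z w : V} (hw : M w = w) (hzw : z ≠ w) : M z ≠ w :=
    fun h ↦ hzw (M.injective (h.trans hw.symm))
  have apply_left : (swap x y * M) x = y := by simp [hx]
  have apply_right : (swap x y * M) y = x := by simp [hy]
  have apply_of_ne {z : V} (hzx : z ≠ x) (hzy : z ≠ y) : (swap x y * M) z = M z :=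
    swap_apply_of_ne_of_ne (apply_ne hx hzx) (apply_ne hy hzy)
  constructor <;> intro z <;> rcases eq_or_ne z x with rfl | hzx
  · rw [apply_left, apply_right]
  · rcases eq_or_ne z y with rfl | hzy
    · rw [apply_right, apply_left]
    · rw [apply_of_ne hzx hzy, apply_of_ne (apply_ne hx hzx) (apply_ne hy hzy), hM.involutive]
  · exact fun _ ↦ by rwa [apply_left]
  · rcases eq_or_ne z y with rfl | hzy
    · exact fun _ ↦ by rw [apply_right]; exact hxy.symm
    · rw [apply_of_ne hzx hzy]
      exact hM.adj_apply z

theorem exists_switch (hM : IsMatchingPerm G M) (hN : IsMatchingPerm G N) {C : Set V}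
    (hCM : Set.MapsTo M C C) (hCN : Set.MapsTo N C C) :
    ∃ M', IsMatchingPerm G M' ∧ (∀ x ∈ C, M' x = N x) ∧ ∀ x ∉ C, M' x = M x := by
  classical
  have hCM' {x : V} (hx : x ∉ C) : M x ∉ C := fun h ↦ hx (by simpa [hM.involutive x] using hCM h)
  have hinv : Function.Involutive fun x ↦ if x ∈ C then N x else M x := by
    intro x
    by_cases hx : x ∈ C
    · simp [hx, hCN hx, hN.involutive x]
    · simp [hx, hCM' hx, hM.involutive x]
  refine ⟨hinv.toPerm, ⟨hinv, fun x ↦ ?_⟩, fun x hx ↦ by simp [hx], fun x hx ↦ by simp [hx]⟩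
  by_cases hx : x ∈ C
  · simpa [hx] using hN.adj_apply x
  · simpa [hx] using hM.adj_apply x

theorem apply_zpow_left (hM : IsMatchingPerm G M) (hN : IsMatchingPerm G N) (i : ℤ) (x : V) :
    M (((N * M) ^ i) x) = ((N * M) ^ (-i)) (M x) := by
  have h : SemiconjBy M (N * M) (N * M)⁻¹ := by
    simp [SemiconjBy, hM.inv_eq_self, hN.inv_eq_self, mul_assoc]
  simpa only [inv_zpow', mul_apply] using DFunLike.congr_fun (h.zpow_right i).eq x

theorem apply_zpow_right (hM : IsMatchingPerm G M) (hN : IsMatchingPerm G N) (i : ℤ) (x : V) :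
    N (((N * M) ^ i) x) = ((N * M) ^ (-i)) (N x) := by
  have hinv : M * N = (N * M)⁻¹ := by rw [mul_inv_rev, hM.inv_eq_self, hN.inv_eq_self]
  simpa only [hinv, inv_zpow', neg_neg] using hN.apply_zpow_left hM (-i) x

/-- If `w = pᵏ u` and `v = pⁱ u` with `p = N * M`, then `p ^ (2 * k)` and `p ^ (2 * i - 1)` fix `u`,
and hence so does `p ^ k`. -/
theorem eq_of_sameCycle (hM : IsMatchingPerm G M) (hN : IsMatchingPerm G N) {u v w : V}
    (hu : M u = u) (hw : M w = w) (hv : N v = v) (huv : (N * M).SameCycle u v)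
    (huw : (N * M).SameCycle u w) : u = w := by
  obtain ⟨i, rfl⟩ := huv
  obtain ⟨k, rfl⟩ := huw
  set p := N * M with hp
  have hk : (p ^ (2 * k)) u = u := by
    rw [hM.apply_zpow_left hN, hu] at hw
    rw [two_mul, zpow_add, mul_apply, ← hw, ← mul_apply, ← zpow_add, add_neg_cancel, zpow_zero,
      one_apply]
  have hi : (p ^ (2 * i - 1)) u = u := by
    have hpu : N u = p u := by rw [hp, mul_apply, hu]
    rw [hM.apply_zpow_right hN, hpu] at hv
    rw [two_mul, add_sub_right_comm, zpow_add, mul_apply, ← hv, ← mul_apply, ← mul_apply,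
      ← zpow_add, ← zpow_add_one, show i - 1 + -i + 1 = 0 by ring, zpow_zero, one_apply]
  calc u = ((p ^ (2 * k)) ^ i * (p ^ (2 * i - 1)) ^ (-k)) u := by
        rw [mul_apply, zpow_apply_eq_self_of_apply_eq_self hi,
          zpow_apply_eq_self_of_apply_eq_self hk]
    _ = (p ^ k) u := by
        rw [← zpow_mul, ← zpow_mul, ← zpow_add]
        congr 2
        ring

variable [Fintype V] [DecidableEq V]

theorem ncard_verts_toSubgraph (hM : IsMatchingPerm G M) :
    hM.toSubgraph.verts.ncard = #M.support := by
  rw [← Set.ncard_coe_finset, coe_support_eq_set_support]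
  rfl

theorem even_card_support (hM : IsMatchingPerm G M) : Even #M.support :=
  even_iff_two_dvd.2 <| two_dvd_card_support <| by
    rw [sq, mul_eq_one_iff_eq_inv, hM.inv_eq_self]

theorem card_support_swap_mul {x y : V} (hxy : x ≠ y) (hx : M x = x) (hy : M y = y) :
    #(swap x y * M).support = #M.support + 2 := by
  have hdisj : Perm.Disjoint (swap x y) M := by
    intro z
    rcases eq_or_ne z x with rfl | hzx
    · exact .inr hx
    rcases eq_or_ne z y with rfl | hzy
    · exact .inr hy
    exact .inl (swap_apply_of_ne_of_ne hzx hzy)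
  rw [hdisj.card_support_mul, card_support_swap hxy, add_comm]

theorem not_adj_of_card_support_le {K : ℕ} (hmax : ∀ M, IsMatchingPerm G M → #M.support ≤ K)
    (hM : IsMatchingPerm G M) (hMK : #M.support = K) {x y : V} (hx : M x = x) (hy : M y = y) :
    ¬G.Adj x y := by
  intro hxy
  have := hmax _ (hM.swap_mul hxy hx hy)
  rw [card_support_swap_mul hxy.ne hx hy] at this
  omega

theorem card_support_add_card_support_of_switch {M N M' N' : Perm V} {C : Set V}
    (hM' : ∀ x ∈ C, M' x = N x) (hM'' : ∀ x ∉ C, M' x = M x)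
    (hN' : ∀ x ∈ C, N' x = M x) (hN'' : ∀ x ∉ C, N' x = N x) :
    #M'.support + #N'.support = #M.support + #N.support := by
  simp only [support, card_filter, ← sum_add_distrib]
  refine sum_congr rfl fun x _ ↦ ?_
  by_cases hx : x ∈ C
  · rw [hM' x hx, hN' x hx, add_comm]
  · rw [hM'' x hx, hN'' x hx]

/-- Gallai's lemma at distance two. Otherwise one of `u` and `w` lies outside the orbit of `v` under
`N * M`. Switching `M` to `N` on that orbit gives a maximum matching missing both `v` and that
vertex, which are adjacent. -/
theorem eq_of_adj_of_adj {K : ℕ} (hmax : ∀ M, IsMatchingPerm G M → #M.support ≤ K)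
    (hM : IsMatchingPerm G M) (hN : IsMatchingPerm G N) (hMK : #M.support = K)
    (hNK : #N.support = K) {u v w : V} (hu : M u = u) (hw : M w = w) (hv : N v = v)
    (huv : G.Adj u v) (hwv : G.Adj w v) : u = w := by
  let C : Set V := {x | (N * M).SameCycle v x}
  have hCN : Set.MapsTo N C C := by
    rintro _ ⟨i, rfl⟩
    exact ⟨-i, by rw [hM.apply_zpow_right hN, hv]⟩
  have hCM : Set.MapsTo M C C := by
    intro x hx
    have : N ((N * M) x) ∈ C := hCN (Perm.sameCycle_apply_right.2 hx)
    rwa [mul_apply, hN.involutive] at this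
  obtain ⟨M', hM', hM'C, hM'C'⟩ := hM.exists_switch hN hCM hCN
  obtain ⟨N', hN', hN'C, hN'C'⟩ := hN.exists_switch hM hCN hCM
  have hM'K : #M'.support = K := by
    have := card_support_add_card_support_of_switch hM'C hM'C' hN'C hN'C'
    have := hmax M' hM'
    have := hmax N' hN'
    omega
  have mem_of_adj {z : V} (hz : M z = z) (hzv : G.Adj z v) : z ∈ C := by
    by_contra hzC
    exact not_adj_of_card_support_le hmax hM' hM'K ((hM'C' z hzC).trans hz)
      ((hM'C v .rfl).trans hv) hzv
  have huC := (mem_of_adj hu huv).symm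
  exact hM.eq_of_sameCycle hN hu hw hv huC (huC.trans (mem_of_adj hw hwv))

end IsMatchingPerm

theorem card_edgeFinset_le_choose_of_forall_adj [Fintype V] {G : SimpleGraph V}
    [DecidableRel G.Adj] (S : Finset V) (hS : ∀ x y, G.Adj x y → x ∈ S ∨ y ∈ S)
    (huniq : ∀ v, ∀ u ∉ S, ∀ w ∉ S, G.Adj u v → G.Adj w v → u = w) :
    #G.edgeFinset ≤ (#S + 1).choose 2 := by
  classical
  have hnbr (v : V) : ∃ o, ∀ u ∉ S, G.Adj u v → u = o := by
    by_cases h : ∃ o ∉ S, G.Adj o v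
    · obtain ⟨o, ho, hov⟩ := h
      exact ⟨o, fun u hu huv ↦ huniq v u hu o ho huv hov⟩
    · exact ⟨v, fun u hu huv ↦ absurd ⟨u, hu, huv⟩ h⟩
  choose o ho using hnbr
  have hsub : G.edgeFinset ⊆ S.offDiag.image Sym2.mk.uncurry ∪ S.image fun x ↦ s(o x, x) := by
    intro e he
    induction e with | h x y =>
    have hxy : G.Adj x y := by simpa using he
    by_cases hx : x ∈ S <;> by_cases hy : y ∈ S
    · exact mem_union_left _ (mem_image.2 ⟨(x, y), by simp [hx, hy, hxy.ne], rfl⟩)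
    · exact mem_union_right _ (mem_image.2 ⟨x, hx, by rw [← ho x y hy hxy.symm, Sym2.eq_swap]⟩)
    · exact mem_union_right _ (mem_image.2 ⟨y, hy, by rw [← ho y x hx hxy]⟩)
    · exact absurd (hS x y hxy) (by simp [hx, hy])
  calc #G.edgeFinset ≤ (#S).choose 2 + #S := by
        rw [← Sym2.card_image_offDiag]
        exact (card_le_card hsub).trans ((card_union_le _ _).trans (by gcongr; exact card_image_le))
    _ = (#S + 1).choose 2 := by rw [Nat.choose_succ_succ', Nat.choose_one_right, add_comm]

theorem card_edgeFinset_le_choose_of_forall_exists_isMatchingPerm [Fintype V] [DecidableEq V]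
    {G : SimpleGraph V} [DecidableRel G.Adj] {k : ℕ}
    (hmax : ∀ M, IsMatchingPerm G M → #M.support ≤ 2 * k)
    (hmiss : ∀ v, ∃ M, IsMatchingPerm G M ∧ M v = v ∧ 2 * k ≤ #M.support) :
    #G.edgeFinset ≤ (2 * k + 1).choose 2 := by
  rcases isEmpty_or_nonempty V with _ | ⟨⟨a⟩⟩
  · exact G.card_edgeFinset_le_card_choose_two.trans (by simp)
  obtain ⟨M, hM, -, hMk⟩ := hmiss a
  replace hMk : #M.support = 2 * k := (hmax M hM).antisymm hMk
  rw [← hMk]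
  refine card_edgeFinset_le_choose_of_forall_adj M.support (fun x y hxy ↦ ?_)
    fun v u hu w hw huv hwv ↦ ?_
  · by_contra! h
    exact IsMatchingPerm.not_adj_of_card_support_le hmax hM hMk (notMem_support.1 h.1)
      (notMem_support.1 h.2) hxy
  · obtain ⟨N, hN, hv, hNk⟩ := hmiss v
    exact IsMatchingPerm.eq_of_adj_of_adj hmax hM hN hMk ((hmax N hN).antisymm hNk)
      (notMem_support.1 hu) (notMem_support.1 hw) hv huv hwv

theorem card_edgeFinset_le_card_edgeFinset_induce_compl_add [Fintype V] [DecidableEq V]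
    (G : SimpleGraph V) [DecidableRel G.Adj] (v : V) :
    #G.edgeFinset ≤ #(G.induce {v}ᶜ).edgeFinset + (Fintype.card V - 1) := by
  rw [G.card_edgeFinset_induce_compl_singleton, G.card_edgeFinset_deleteIncidenceSet]
  have := G.degree_lt_card_verts v
  omega

theorem choose_two_add (m n : ℕ) :
    (m + n).choose 2 = m.choose 2 + n.choose 2 + m * n := by
  induction n with
  | zero => simp
  | succ n ih =>
    rw [← add_assoc, Nat.choose_succ_succ', ih, Nat.choose_succ_succ' n]
    simp only [Nat.choose_one_right]
    ring

theorem choose_two_two_mul_add_one (k : ℕ) : (2 * k + 1).choose 2 = (2 * k + 1) * k := by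
  rw [Nat.choose_two_right, Nat.add_sub_cancel, mul_left_comm, Nat.mul_div_cancel_left _ two_pos]

theorem choose_two_two_mul_add_one_le {d k : ℕ} (h : 3 * k + 1 ≤ 2 * d) :
    (2 * k + 1).choose 2 ≤ k.choose 2 + k * (d + 1) := by
  have htwice := Nat.add_one_mul_choose_eq k 1
  rw [Nat.choose_succ_succ', Nat.choose_one_right] at htwice
  rw [choose_two_two_mul_add_one]
  nlinarith

theorem max_choose_two_add_le (m k : ℕ) :
    max ((2 * k + 1).choose 2) (k.choose 2 + k * (m - k)) + m ≤
      max ((2 * (k + 1) + 1).choose 2) ((k + 1).choose 2 + (k + 1) * (m - k)) := by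
  have hk : (k + 1).choose 2 = k.choose 2 + k := by
    rw [Nat.choose_succ_succ', Nat.choose_one_right, add_comm]
  rw [max_add, max_le_iff, choose_two_two_mul_add_one, choose_two_two_mul_add_one, hk]
  have hm : m ≤ k + (m - k) := le_add_tsub
  constructor
  · rcases le_total (m - k) (3 * k + 3) with h | h
    · exact le_max_of_le_left (by nlinarith)
    · exact le_max_of_le_right (by nlinarith)
  · exact le_max_of_le_right (by linarith)

/-- Induction on `k`, deleting a vertex that lies in every maximum matching. -/
theorem card_edgeFinset_le_of_isMatchingPerm_card_support_le [Fintype V]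
    [DecidableEq V] {G : SimpleGraph V} [DecidableRel G.Adj] {k : ℕ}
    (hmax : ∀ M, IsMatchingPerm G M → #M.support ≤ 2 * k) :
    #G.edgeFinset ≤ max ((2 * k + 1).choose 2) (k.choose 2 + k * (Fintype.card V - k)) := by
  induction k generalizing V with
  | zero =>
    exact le_max_of_le_left <| card_edgeFinset_le_choose_of_forall_exists_isMatchingPerm hmax
      fun _ ↦ ⟨1, .one, rfl, by simp⟩
  | succ k ih =>
    by_cases hmiss : ∀ v, ∃ M, IsMatchingPerm G M ∧ M v = v ∧ 2 * (k + 1) ≤ #M.support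
    · exact le_max_of_le_left
        (card_edgeFinset_le_choose_of_forall_exists_isMatchingPerm hmax hmiss)
    push Not at hmiss
    obtain ⟨v, hv⟩ := hmiss
    have hmax' (M : Perm ({v}ᶜ : Set V)) (hM : IsMatchingPerm (G.induce {v}ᶜ) M) :
        #M.support ≤ 2 * k := by
      have hlt := hv _ hM.ofSubtype (ofSubtype_apply_of_not_mem M (by simp))
      rw [support_ofSubtype, card_map] at hlt
      have := hM.even_card_support.two_dvd
      omega
    have hcard : Fintype.card ({v}ᶜ : Set V) = Fintype.card V - 1 := by
      rw [Fintype.card_compl_set, Set.card_singleton]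
    calc #G.edgeFinset
        ≤ #(G.induce {v}ᶜ).edgeFinset + (Fintype.card V - 1) :=
          card_edgeFinset_le_card_edgeFinset_induce_compl_add G v
      _ ≤ _ := by
          grw [ih hmax', hcard]
          rw [add_comm k 1, ← Nat.sub_sub, add_comm 1 k]
          exact max_choose_two_add_le (Fintype.card V - 1) k

theorem ncard_verts_of_isMatching [Finite V] {G : SimpleGraph V} {M : G.Subgraph}
    (hM : M.IsMatching) : M.verts.ncard = 2 * M.edgeSet.ncard := by
  classical
  have := Fintype.ofFinite V
  have hdeg (v : V) : M.spanningCoe.degree v = if v ∈ M.verts then 1 else 0 := by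
    split_ifs with hv
    · rw [M.degree_spanningCoe, SimpleGraph.Subgraph.isMatching_iff_forall_degree.1 hM v hv]
    · rw [M.degree_spanningCoe, M.degree_of_notMem_verts hv]
  calc M.verts.ncard = ∑ v, M.spanningCoe.degree v := by
        simp_rw [hdeg, sum_boole, Nat.cast_id, ← Set.ncard_coe_finset, coe_filter_univ]
        rfl
    _ = 2 * M.edgeSet.ncard := by
        rw [SimpleGraph.sum_degrees_eq_twice_card_edges, ← Set.ncard_coe_finset,
          SimpleGraph.coe_edgeFinset, SimpleGraph.Subgraph.edgeSet_spanningCoe]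

theorem card_edgeFinset_le_of_isMatching_ncard_le [Fintype V] {G : SimpleGraph V}
    [DecidableRel G.Adj] {k : ℕ} (hG : ∀ M : G.Subgraph, M.IsMatching → M.edgeSet.ncard ≤ k) :
    #G.edgeFinset ≤ max ((2 * k + 1).choose 2) (k.choose 2 + k * (Fintype.card V - k)) := by
  classical
  refine card_edgeFinset_le_of_isMatchingPerm_card_support_le fun M hM ↦ ?_
  have hMv := ncard_verts_of_isMatching hM.isMatching_toSubgraph
  rw [hM.ncard_verts_toSubgraph] at hMv
  have := hG _ hM.isMatching_toSubgraph
  omega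

open Classical in
/-- The collection `P(c)` of private `2`-subsets of the column `c`. -/
noncomputable def privatePairs (col : ι → Finset ρ) (c : ι) : Finset (Finset ρ) :=
  {e ∈ (col c).powersetCard 2 | ∀ j, j ≠ c → ¬e ⊆ col j}

/-- The graph on the rows of the column `c` whose edges are the `2`-subsets of `c` that are not
private. -/
def sharedPairGraph (col : ι → Finset ρ) (c : ι) : SimpleGraph (col c) where
  Adj x y := x ≠ y ∧ ∃ j ≠ c, x.1 ∈ col j ∧ y.1 ∈ col j
  symm := ⟨fun _ _ ⟨hne, j, hj, hx, hy⟩ ↦ ⟨hne.symm, j, hj, hy, hx⟩⟩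
  loopless := ⟨fun _ h ↦ h.1 rfl⟩

theorem choose_two_le_card_privatePairs_add (col : ι → Finset ρ) (c : ι)
    [DecidableRel (sharedPairGraph col c).Adj] :
    (#(col c)).choose 2 ≤ #(privatePairs col c) + #(sharedPairGraph col c).edgeFinset := by
  classical
  have hsub : (col c).powersetCard 2 ⊆ privatePairs col c ∪
      (sharedPairGraph col c).edgeFinset.image fun e ↦ (e.map Subtype.val).toFinset := by
    intro e he
    by_cases hpriv : ∀ j, j ≠ c → ¬e ⊆ col j
    · exact mem_union_left _ (mem_filter.2 ⟨he, hpriv⟩)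
    push Not at hpriv
    obtain ⟨j, hj, hej⟩ := hpriv
    obtain ⟨hec, he2⟩ := mem_powersetCard.1 he
    obtain ⟨x, y, hxy, rfl⟩ := card_eq_two.1 he2
    simp only [insert_subset_iff, singleton_subset_iff] at hec hej
    refine mem_union_right _ (mem_image.2 ⟨s(⟨x, hec.1⟩, ⟨y, hec.2⟩), ?_,
      by simp [Sym2.toFinset_mk_eq]⟩)
    exact SimpleGraph.mem_edgeFinset.2 ⟨by simpa using hxy, j, hj, hej⟩
  calc (#(col c)).choose 2 = #((col c).powersetCard 2) := (card_powersetCard 2 _).symm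
    _ ≤ _ := (card_le_card hsub).trans ((card_union_le _ _).trans (by gcongr; exact card_image_le))

/-- Take one column for each edge of the matching and one for each unmatched row. -/
theorem exists_subset_biUnion_of_isMatching [DecidableEq ρ] {col : ι → Finset ρ} {c : ι}
    (hiso : ¬IsolatedCol col c) {M : (sharedPairGraph col c).Subgraph} (hM : M.IsMatching) :
    ∃ S : Finset ι, c ∉ S ∧ #S + M.edgeSet.ncard ≤ #(col c) ∧ col c ⊆ S.biUnion col := by
  classical
  have hrow (x : col c) : ∃ j ≠ c, x.1 ∈ col j := by
    by_contra! h
    exact hiso ⟨x, x.2, fun j hxj ↦ by_contra fun hj ↦ h j hj hxj⟩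
  have hedge (e : Sym2 (col c)) : ∃ j ≠ c, e ∈ M.edgeSet → ∀ x ∈ e, x.1 ∈ col j := by
    induction e with | h x y =>
    by_cases hxy : M.Adj x y
    · obtain ⟨-, j, hj, hxj, hyj⟩ := hxy.adj_sub
      exact ⟨j, hj, fun _ ↦ by simp [hxj, hyj]⟩
    · obtain ⟨j, hj, -⟩ := hrow x
      exact ⟨j, hj, fun h ↦ absurd h hxy⟩
  choose f hfc hf using hrow
  choose g hgc hg using hedge
  refine ⟨M.edgeSet.toFinset.image g ∪ M.vertsᶜ.toFinset.image f, by simp [hfc, hgc], ?_,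
    fun x hx ↦ mem_biUnion.2 ?_⟩
  · have hcard : #(M.edgeSet.toFinset.image g ∪ M.vertsᶜ.toFinset.image f) ≤
        M.edgeSet.ncard + M.vertsᶜ.ncard := by
      rw [Set.ncard_eq_toFinset_card', Set.ncard_eq_toFinset_card']
      exact (card_union_le _ _).trans (add_le_add card_image_le card_image_le)
    have hverts := Set.ncard_add_ncard_compl M.verts
    rw [ncard_verts_of_isMatching hM, Nat.card_eq_fintype_card, Fintype.card_coe] at hverts
    omega
  · by_cases hxM : ⟨x, hx⟩ ∈ M.verts
    · obtain ⟨y, hxy, -⟩ := hM hxM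
      exact ⟨g s(⟨x, hx⟩, y), mem_union_left _ (mem_image_of_mem g (by simpa using hxy)),
        hg _ hxy _ (Sym2.mem_mk_left _ _)⟩
    · exact ⟨f ⟨x, hx⟩, mem_union_right _ (mem_image_of_mem f (by simpa using hxM)), hf _⟩

theorem Disjunct.add_ncard_edgeSet_lt [DecidableEq ρ] {d : ℕ} {col : ι → Finset ρ}
    (hdis : Disjunct d col) {c : ι} (hiso : ¬IsolatedCol col c)
    {M : (sharedPairGraph col c).Subgraph} (hM : M.IsMatching) :
    d + M.edgeSet.ncard < #(col c) := by
  obtain ⟨S, hcS, hScard, hcover⟩ := exists_subset_biUnion_of_isMatching hiso hM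
  have hSd : d < #S := not_le.1 fun h ↦ hdis c S hcS h hcover
  omega

theorem Disjunct.choose_two_le_card_privatePairs_add_max [DecidableEq ρ] {d k : ℕ}
    {col : ι → Finset ρ} (hdis : Disjunct d col) {c : ι} (hiso : ¬IsolatedCol col c)
    (hc : #(col c) = d + 1 + k) :
    (d + 1 + k).choose 2 ≤
      #(privatePairs col c) + max ((2 * k + 1).choose 2) (k.choose 2 + k * (d + 1)) := by
  classical
  have hmatch (M : (sharedPairGraph col c).Subgraph) (hM : M.IsMatching) :
      M.edgeSet.ncard ≤ k := by
    have := hdis.add_ncard_edgeSet_lt hiso hM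
    omega
  have hedges := card_edgeFinset_le_of_isMatching_ncard_le hmatch
  rw [Fintype.card_coe, hc, Nat.add_sub_cancel] at hedges
  grw [← hc, choose_two_le_card_privatePairs_add, hedges]

theorem private_pairs_lower_bound_general [DecidableEq ρ] {d s : ℕ} {col : ι → Finset ρ}
    (hdis : Disjunct d col) {c : ι} (hiso : ¬IsolatedCol col c) (hc : #(col c) = d + s)
    (hsmall : 3 * s ≤ 2 * d + 2) :
    (d + 1).choose 2 ≤ #(privatePairs col c) := by
  have hs : d < d + s := by
    have hbot : (⊥ : (sharedPairGraph col c).Subgraph).IsMatching :=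
      fun _ hx ↦ absurd hx (Set.notMem_empty _)
    simpa [hc] using hdis.add_ncard_edgeSet_lt hiso hbot
  obtain ⟨k, rfl⟩ : ∃ k, s = k + 1 := Nat.exists_eq_succ_of_ne_zero (by omega)
  have hbound := hdis.choose_two_le_card_privatePairs_add_max hiso (k := k) (by omega)
  rw [max_eq_right (choose_two_two_mul_add_one_le (by omega)), choose_two_add] at hbound
  linarith

/-- In a `d`-disjunct matrix with no isolated columns, a column `c` of weight
`d + s` with `1 ≤ s ≤ d − 1` and `d + s ≤ (5d + 2)/3` has at least
`C(d+1, 2)` private 2-subsets. -/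
theorem private_pairs_lower_bound
    (d s t n : ℕ) (hd : 1 ≤ d) (hs1 : 1 ≤ s) (hs2 : s ≤ d - 1)
    (col : Fin n → Finset (Fin t))
    (hdis : Disjunct d col)
    (hiso : ∀ j, ¬ IsolatedCol col j)
    (c : Fin n) (hc : (col c).card = d + s)
    (hsmall : ((d : ℝ) + s) ≤ (5 * (d : ℝ) + 2) / 3) :
    Nat.choose (d + 1) 2 ≤
      (((col c).powersetCard 2).filter (fun e => ∀ j', j' ≠ c → ¬ e ⊆ col j')).card := by
  have hsmall' : (3 * s : ℝ) ≤ 2 * d + 2 := by linarith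
  convert private_pairs_lower_bound_general hdis (hiso c) hc (mod_cast hsmall')
  rw [privatePairs]
  congr!
end

section
/- Let d ≥ 1 and let M be a t×n binary matrix with n > t that is d-disjunct, such that every column of M has weight at most ⌊5d/3⌋. Then t > d² + d + 1. -/
open Finset

/-!
Fix a column `c` all of whose rows lie in other columns too, and join two rows of `c` when another
column contains both. A matching with `k` edges in this graph would let `#c - k` other columns
cover `c`, so disjunctness bounds the matching number by `#c - d - 1`. The Erdős–Gallai theorem
then leaves at least `d * (d + 1) / 2` nonadjacent pairs; these are pairs of rows which lie together
in `c` only. The weight bound places the graph in the range `3 * #c ≤ 5 * d + 2` in which the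
extremal graph of that theorem is the required one. Isolated columns are discarded together with one
private row each, which leaves more columns than rows, and the pairs owned by distinct columns are
distinct: `r` rows carry more than `r` columns with `d * (d + 1) / 2` pairs each, whence
`r > d ^ 2 + d + 1`.

The Erdős–Gallai theorem is proved by induction on the matching number. A vertex met by every
maximum matching is deleted. If there is no such vertex, an exchange argument shows that each vertex
of a maximum matching has at most one neighbour among the unmatched vertices, which are independent.
-/

section Matching

variable {V : Type*} {G : SimpleGraph V} {k : ℕ} {W : Finset V} {u v x y : V}

lemma isMatching_deleteVerts_pair {M : G.Subgraph} (hM : M.IsMatching) (huv : M.Adj u v) :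
    (M.deleteVerts {u, v}).IsMatching := by
  rintro a ⟨haM, ha⟩
  obtain ⟨b, hab, huniq⟩ := hM haM
  have hb : b ∉ ({u, v} : Set V) := by
    rintro (rfl | rfl)
    · exact ha (.inr (hM.eq_of_adj_left hab.symm huv))
    · exact ha (.inl (hM.eq_of_adj_left hab.symm huv.symm))
  exact ⟨b, SimpleGraph.Subgraph.deleteVerts_adj.2 ⟨haM, ha, hab.snd_mem, hb, hab⟩,
    fun c hc ↦ huniq c (SimpleGraph.Subgraph.deleteVerts_adj.1 hc).2.2.2.2⟩

/-- The vertex set `W` contains all the vertices of some matching of `G` with `k` edges. A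
matching is a subgraph in Mathlib, so its size is recorded by its number `2 * k` of vertices. -/
def HasMatchingIn (G : SimpleGraph V) (k : ℕ) (W : Finset V) : Prop :=
  ∃ M : G.Subgraph, M.IsMatching ∧ M.verts ⊆ W ∧ M.verts.ncard = 2 * k

lemma hasMatchingIn_zero : HasMatchingIn G 0 W :=
  ⟨⊥, fun _ hv ↦ hv.elim, by simp, by simp⟩

namespace HasMatchingIn

lemma mono {W' : Finset V} (h : HasMatchingIn G k W) (hW : W ⊆ W') : HasMatchingIn G k W' := by
  obtain ⟨M, hM, hMW, hcard⟩ := h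
  exact ⟨M, hM, hMW.trans (coe_subset.2 hW), hcard⟩

lemma exists_subset_card_eq (h : HasMatchingIn G k W) :
    ∃ U ⊆ W, #U = 2 * k ∧ HasMatchingIn G k U := by
  obtain ⟨M, hM, hMW, hcard⟩ := h
  obtain ⟨U, hU⟩ := (W.finite_toSet.subset hMW).exists_finset_coe
  rw [← hU] at hMW
  refine ⟨U, coe_subset.1 hMW, ?_, M, hM, hU.ge, hcard⟩
  rw [← Set.ncard_coe_finset, hU, hcard]

variable [DecidableEq V]

lemma add_edge (h : HasMatchingIn G k (W \ {u, v})) (huv : G.Adj u v)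
    (hu : u ∈ W) (hv : v ∈ W) : HasMatchingIn G (k + 1) W := by
  obtain ⟨M, hM, hMW, hcard⟩ := h
  have hdisj : Disjoint M.verts {u, v} :=
    Set.disjoint_left.2 fun z hz hz' ↦ (mem_sdiff.1 (hMW hz)).2 (by simpa using hz')
  have hfin : M.verts.Finite := (W \ {u, v}).finite_toSet.subset hMW
  refine ⟨M ⊔ G.subgraphOfAdj huv, hM.sup (.subgraphOfAdj huv) ?_, ?_, ?_⟩
  · rwa [hM.support_eq_verts, SimpleGraph.Subgraph.IsMatching.support_eq_verts (.subgraphOfAdj huv)]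
  · refine Set.union_subset (hMW.trans (coe_subset.2 sdiff_subset)) ?_
    rintro z (rfl | rfl) <;> assumption
  · rw [SimpleGraph.Subgraph.verts_sup, SimpleGraph.subgraphOfAdj_verts,
      Set.ncard_union_eq hdisj hfin, hcard, Set.ncard_pair huv.ne, mul_add_one]

lemma sdiff_pair_of_isMatching_of_adj {M : G.Subgraph} (hM : M.IsMatching) (hMW : M.verts ⊆ W)
    (hcard : M.verts.ncard = 2 * (k + 1)) (huv : M.Adj u v) : HasMatchingIn G k (W \ {u, v}) := by
  refine ⟨M.deleteVerts {u, v}, isMatching_deleteVerts_pair hM huv, ?_, ?_⟩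
  · rw [SimpleGraph.Subgraph.deleteVerts_verts, coe_sdiff, coe_pair]
    exact Set.sdiff_subset_sdiff_left hMW
  · rw [SimpleGraph.Subgraph.deleteVerts_verts,
      Set.ncard_sdiff (Set.pair_subset huv.fst_mem huv.snd_mem), hcard, Set.ncard_pair huv.ne]
    omega

lemma sdiff_singleton_or_exists_adj (h : HasMatchingIn G (k + 1) W) (x : V) :
    HasMatchingIn G (k + 1) (W \ {x}) ∨
      x ∈ W ∧ ∃ y ∈ W, G.Adj x y ∧ HasMatchingIn G k (W \ {x, y}) := by
  obtain ⟨M, hM, hMW, hcard⟩ := h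
  by_cases hx : x ∈ M.verts
  · obtain ⟨y, hxy, -⟩ := hM hx
    exact .inr ⟨hMW hx, y, hMW hxy.snd_mem, hxy.adj_sub,
      sdiff_pair_of_isMatching_of_adj hM hMW hcard hxy⟩
  · refine .inl ⟨M, hM, fun z hz ↦ ?_, hcard⟩
    have hzx : z ≠ x := fun h ↦ hx (h ▸ hz)
    simpa [hzx] using hMW hz

lemma exists_adj (h : HasMatchingIn G (k + 1) W) :
    ∃ x ∈ W, ∃ y ∈ W, G.Adj x y ∧ HasMatchingIn G k (W \ {x, y}) := by
  obtain ⟨M, hM, hMW, hcard⟩ := h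
  obtain ⟨x, hx⟩ : M.verts.Nonempty := Set.nonempty_of_ncard_ne_zero (by omega)
  obtain ⟨y, hxy, -⟩ := hM hx
  exact ⟨x, hMW hx, y, hMW hxy.snd_mem, hxy.adj_sub,
    sdiff_pair_of_isMatching_of_adj hM hMW hcard hxy⟩

-- An alternating path from `x` either ends at one of `u`, `v`, and then misses the other one, or
-- misses both.
lemma exchange (huv : u ≠ v) (hmax : ¬ HasMatchingIn G (k + 1) W)
    (h_uv : HasMatchingIn G k (W \ {u, v})) (h_x : HasMatchingIn G k (W \ {x})) :
    HasMatchingIn G k (W \ {x, u}) ∨ HasMatchingIn G k (W \ {x, v}) := by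
  induction k generalizing W x with
  | zero => exact .inl hasMatchingIn_zero
  | succ k ih =>
    obtain h_uvx | ⟨hx, y, hy, hxy, h_uvxy⟩ := h_uv.sdiff_singleton_or_exists_adj x
    · exact .inl (h_uvx.mono (by grind))
    have hmax' : ¬ HasMatchingIn G (k + 1) (W \ {x, y}) :=
      fun h ↦ hmax (h.add_edge hxy (by grind) (by grind))
    obtain h_xy | ⟨-, z, hz, hyz, h_xyz⟩ := h_x.sdiff_singleton_or_exists_adj y
    · exact (hmax' (h_xy.mono (by grind))).elim
    obtain rfl | hzu := eq_or_ne z u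
    · exact .inr ((h_uvxy.mono (by grind)).add_edge hyz (by grind) (by grind))
    obtain rfl | hzv := eq_or_ne z v
    · exact .inl ((h_uvxy.mono (by grind)).add_edge hyz (by grind) (by grind))
    have h_uv' : HasMatchingIn G k ((W \ {x, y}) \ {u, v}) := h_uvxy.mono (by grind)
    have h_z : HasMatchingIn G k ((W \ {x, y}) \ {z}) := h_xyz.mono (by grind)
    exact (ih hmax' h_uv' h_z).imp
      (fun h ↦ (h.mono (by grind)).add_edge hyz (by grind) (by grind))
      (fun h ↦ (h.mono (by grind)).add_edge hyz (by grind) (by grind))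

lemma not_adj_and_adj_of_sdiff (huv : u ≠ v) (hmax : ¬ HasMatchingIn G (k + 1) W)
    (h_uv : HasMatchingIn G k (W \ {u, v})) (h_x : HasMatchingIn G k (W \ {x}))
    (hu : u ∈ W) (hv : v ∈ W) (hx : x ∈ W) : ¬ (G.Adj x u ∧ G.Adj x v) := by
  rintro ⟨hxu, hxv⟩
  obtain h | h := exchange huv hmax h_uv h_x
  · exact hmax (h.add_edge hxu hx hu)
  · exact hmax (h.add_edge hxv hx hv)

end HasMatchingIn

variable [DecidableEq V]

lemma card_interedges_union_left (H : SimpleGraph V) [DecidableRel H.Adj] {A B : Finset V}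
    (hAB : Disjoint A B) (C : Finset V) :
    #(H.interedges (A ∪ B) C) = #(H.interedges A C) + #(H.interedges B C) := by
  rw [← card_union_of_disjoint (H.interedges_disjoint_left hAB C)]
  simp only [SimpleGraph.interedges_def, union_product, filter_union]

lemma card_interedges_union_self (H : SimpleGraph V) [DecidableRel H.Adj] {A B : Finset V}
    (hAB : Disjoint A B) :
    #(H.interedges (A ∪ B) (A ∪ B)) =
      #(H.interedges A A) + 2 * #(H.interedges A B) + #(H.interedges B B) := by
  have := H.symm
  have hcomm (C D : Finset V) : #(H.interedges C D) = #(H.interedges D C) :=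
    Rel.card_interedges_comm C D
  rw [card_interedges_union_left H hAB, hcomm A, hcomm B, card_interedges_union_left H hAB,
    card_interedges_union_left H hAB, hcomm B A]
  ring

variable [DecidableRel G.Adj]

lemma interedges_compl_self_of_isIndepSet {O : Finset V} (hO : G.IsIndepSet O) :
    Gᶜ.interedges O O = O.offDiag := by
  ext ⟨a, b⟩
  simp only [SimpleGraph.mk_mem_interedges_iff, mem_offDiag, SimpleGraph.compl_adj]
  exact ⟨fun ⟨ha, hb, hab, _⟩ ↦ ⟨ha, hb, hab⟩, fun ⟨ha, hb, hab⟩ ↦ ⟨ha, hb, hab, hO ha hb hab⟩⟩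

lemma card_mul_sub_one_le_card_interedges_compl {U O : Finset V} (hUO : Disjoint U O)
    (hunique : ∀ x ∈ U, ∀ u ∈ O, ∀ v ∈ O, G.Adj x u → G.Adj x v → u = v) :
    #U * (#O - 1) ≤ #(Gᶜ.interedges U O) := by
  have hadj : #(G.interedges U O) ≤ #U := by
    refine card_le_card_of_injOn Prod.fst (fun p hp ↦ (G.mem_interedges_iff.1 hp).1) ?_
    rintro ⟨x, u⟩ hp ⟨_, v⟩ hq rfl
    obtain ⟨hx, hu, hxu⟩ := G.mk_mem_interedges_iff.1 hp
    obtain ⟨-, hv, hxv⟩ := G.mk_mem_interedges_iff.1 hq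
    exact congrArg (Prod.mk x) (hunique x hx u hu v hv hxu hxv)
  have htotal := G.card_interedges_add_card_interedges_compl hUO
  rw [Nat.mul_sub_one]
  omega

lemma add_mul_sub_le_card_interedges_compl_of_forall (hmax : ¬ HasMatchingIn G (k + 1) W)
    (havoid : ∀ x ∈ W, HasMatchingIn G k (W \ {x})) :
    (#W + 2 * k) * (#W - 2 * k - 1) ≤ #(Gᶜ.interedges W W) := by
  obtain rfl | ⟨x₀, hx₀⟩ := W.eq_empty_or_nonempty
  · simp
  obtain ⟨U, hUW, hUcard, hU⟩ := ((havoid x₀ hx₀).mono sdiff_subset).exists_subset_card_eq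
  have hpair : ∀ u ∈ W \ U, ∀ v ∈ W \ U, HasMatchingIn G k (W \ {u, v}) :=
    fun u hu v hv ↦ hU.mono (by grind)
  have hindep : G.IsIndepSet (W \ U : Finset V) := fun u hu v hv _ huv ↦
    hmax ((hpair u hu v hv).add_edge huv (mem_sdiff.1 hu).1 (mem_sdiff.1 hv).1)
  have hunique : ∀ x ∈ U, ∀ u ∈ W \ U, ∀ v ∈ W \ U, G.Adj x u → G.Adj x v → u = v := by
    intro x hx u hu v hv hxu hxv
    by_contra huv
    exact HasMatchingIn.not_adj_and_adj_of_sdiff huv hmax (hpair u hu v hv) (havoid x (hUW hx))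
      (mem_sdiff.1 hu).1 (mem_sdiff.1 hv).1 (hUW hx) ⟨hxu, hxv⟩
  have hOcard : #(W \ U) = #W - 2 * k := by rw [card_sdiff_of_subset hUW, hUcard]
  have hWcard : 2 * k ≤ #W := hUcard ▸ card_le_card hUW
  calc (#W + 2 * k) * (#W - 2 * k - 1)
      = 2 * (2 * k * (#W - 2 * k - 1)) + (#W - 2 * k) * (#W - 2 * k - 1) := by
        obtain ⟨m, hm⟩ := Nat.exists_eq_add_of_le hWcard
        rw [hm, Nat.add_sub_cancel_left]
        ring
    _ = 2 * (#U * (#(W \ U) - 1)) + #(Gᶜ.interedges (W \ U) (W \ U)) := by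
        rw [interedges_compl_self_of_isIndepSet hindep, offDiag_card, hUcard, hOcard,
          Nat.mul_sub_one (#W - 2 * k)]
    _ ≤ 2 * #(Gᶜ.interedges U (W \ U)) + #(Gᶜ.interedges (W \ U) (W \ U)) := by
        gcongr
        exact card_mul_sub_one_le_card_interedges_compl disjoint_sdiff hunique
    _ ≤ #(Gᶜ.interedges W W) := by
        have hsplit := card_interedges_union_self Gᶜ (disjoint_sdiff (s := U) (t := W))
        rw [union_sdiff_of_subset hUW] at hsplit
        omega

lemma sub_mul_sub_le_add_mul_sub {N k : ℕ} (h : 5 * k + 3 ≤ 2 * N) :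
    (N - k) * (N - k - 1) ≤ (N + 2 * k) * (N - 2 * k - 1) := by
  obtain rfl | hk := k.eq_zero_or_pos
  · simp
  obtain ⟨m, rfl⟩ : ∃ m, N = m + 1 + 2 * k := ⟨N - 1 - 2 * k, by omega⟩
  have h₁ : m + 1 + 2 * k - k = m + k + 1 := by omega
  have h₂ : m + 1 + 2 * k - 2 * k - 1 = m := by omega
  have hkm : k + 1 ≤ 2 * m := by omega
  rw [h₁, h₂, Nat.add_sub_cancel]
  nlinarith [Nat.mul_le_mul_left k hkm]

-- The Erdős–Gallai matching theorem, counting the ordered pairs of nonadjacent vertices. For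
-- `5 * k + 3 ≤ 2 * #W` the extremal graph has `k` vertices joined to all others and no further
-- edges; below this range it is a complete graph on `2 * k + 1` vertices with isolated vertices.
lemma sub_mul_sub_le_card_interedges_compl (hmax : ¬ HasMatchingIn G (k + 1) W)
    (hW : 5 * k + 3 ≤ 2 * #W) : (#W - k) * (#W - k - 1) ≤ #(Gᶜ.interedges W W) := by
  induction k generalizing W with
  | zero =>
    simpa using add_mul_sub_le_card_interedges_compl_of_forall hmax fun _ _ ↦ hasMatchingIn_zero
  | succ k ih =>
    by_cases havoid : ∀ x ∈ W, HasMatchingIn G (k + 1) (W \ {x})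
    · refine le_trans ?_ (add_mul_sub_le_card_interedges_compl_of_forall hmax havoid)
      exact sub_mul_sub_le_add_mul_sub hW
    · push Not at havoid
      obtain ⟨x, hx, hmax'⟩ := havoid
      have hcard : #(W \ {x}) = #W - 1 := by
        rw [sdiff_singleton_eq_erase, card_erase_of_mem hx]
      calc (#W - (k + 1)) * (#W - (k + 1) - 1) = (#(W \ {x}) - k) * (#(W \ {x}) - k - 1) := by
            rw [hcard, Nat.sub_sub #W 1 k, add_comm 1 k]
        _ ≤ #(Gᶜ.interedges (W \ {x}) (W \ {x})) := ih hmax' (by omega)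
        _ ≤ #(Gᶜ.interedges W W) :=
            card_le_card (Gᶜ.interedges_mono sdiff_subset sdiff_subset)

end Matching

section Columns

variable {ι ρ : Type*} {col : ι → Finset ρ} {c : ι} {d k : ℕ} {W : Finset ρ}

/-- Two rows are joined when some column other than `c` contains both of them. Matchings among the
rows of `c` yield economical covers of `c` by other columns, while the nonadjacent pairs of such
rows lie together in `c` only. -/
def jointGraph (col : ι → Finset ρ) (c : ι) : SimpleGraph ρ where
  Adj a b := a ≠ b ∧ ∃ j ≠ c, a ∈ col j ∧ b ∈ col j
  symm := ⟨fun _ _ ⟨hab, j, hj, ha, hb⟩ ↦ ⟨hab.symm, j, hj, hb, ha⟩⟩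
  loopless := ⟨fun _ h ↦ h.1 rfl⟩

lemma exists_ne_mem_of_not_isolatedCol (hc : ¬ IsolatedCol col c) {i : ρ} (hi : i ∈ col c) :
    ∃ j ≠ c, i ∈ col j := by
  by_contra! h
  exact hc ⟨i, hi, fun j hij ↦ by_contra fun hjc ↦ h j hjc hij⟩

open Classical in
/-- The ordered pairs of distinct rows of the column `c` that lie together in no other column. Those
of different columns are disjoint, so they can be counted against all pairs of rows. -/
noncomputable def ownPairs (col : ι → Finset ρ) (c : ι) : Finset (ρ × ρ) :=
  (jointGraph col c)ᶜ.interedges (col c) (col c)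

lemma mem_ownPairs {p : ρ × ρ} : p ∈ ownPairs col c ↔
    p ∈ (col c).offDiag ∧ ∀ j, p.1 ∈ col j → p.2 ∈ col j → j = c := by
  rw [ownPairs, SimpleGraph.mem_interedges_iff, SimpleGraph.compl_adj, mem_offDiag]
  simp only [jointGraph]
  grind

lemma pairwiseDisjoint_ownPairs (s : Set ι) : s.PairwiseDisjoint (ownPairs col) := by
  intro c _ c' _ hcc'
  refine Finset.disjoint_left.2 fun p hp hp' ↦ hcc' ?_
  obtain ⟨hpc, -⟩ := mem_ownPairs.1 hp
  rw [mem_offDiag] at hpc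
  exact (mem_ownPairs.1 hp').2 c hpc.1 hpc.2.1

variable [DecidableEq ρ]

-- One column pays for both ends of a matching edge, so the matching saves `k` columns.
lemma exists_cover_of_hasMatchingIn (hmatch : HasMatchingIn (jointGraph col c) k W)
    (hcov : ∀ i ∈ W, ∃ j ≠ c, i ∈ col j) :
    ∃ S : Finset ι, c ∉ S ∧ #S + k ≤ #W ∧ W ⊆ S.biUnion col := by
  classical
  induction k generalizing W with
  | zero =>
    choose f hfc hf using fun i : W ↦ hcov i i.2
    refine ⟨univ.image f, ?_, ?_, fun i hi ↦ ?_⟩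
    · simpa using hfc
    · simpa using card_image_le (s := univ) (f := f)
    · exact mem_biUnion.2 ⟨f ⟨i, hi⟩, mem_image_of_mem f (mem_univ _), hf _⟩
  | succ k ih =>
    obtain ⟨a, ha, b, hb, ⟨hab, j, hjc, haj, hbj⟩, hmatch'⟩ := hmatch.exists_adj
    obtain ⟨S, hcS, hScard, hWS⟩ := ih hmatch' fun i hi ↦ hcov i (mem_sdiff.1 hi).1
    have hpair : {a, b} ⊆ W := insert_subset ha (singleton_subset_iff.2 hb)
    have hpair_le : 2 ≤ #W := card_pair hab ▸ card_le_card hpair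
    refine ⟨insert j S, by simp [hcS, hjc.symm], ?_, ?_⟩
    · rw [card_sdiff_of_subset hpair, card_pair hab] at hScard
      have := card_insert_le j S
      omega
    · calc W = {a, b} ∪ (W \ {a, b}) := (union_sdiff_of_subset hpair).symm
        _ ⊆ col j ∪ S.biUnion col :=
            union_subset_union (insert_subset haj (singleton_subset_iff.2 hbj)) hWS
        _ = (insert j S).biUnion col := biUnion_insert.symm

namespace Disjunct

lemma not_hasMatchingIn (hdis : Disjunct d col) (hc : ¬ IsolatedCol col c)
    (hk : #(col c) ≤ d + k) : ¬ HasMatchingIn (jointGraph col c) k (col c) := by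
  intro hmatch
  obtain ⟨S, hcS, hScard, hcover⟩ :=
    exists_cover_of_hasMatchingIn hmatch fun _ ↦ exists_ne_mem_of_not_isolatedCol hc
  exact hdis c S hcS (by omega) hcover

lemma lt_card (hdis : Disjunct d col) (hc : ¬ IsolatedCol col c) : d < #(col c) := by
  by_contra! hle
  exact hdis.not_hasMatchingIn hc (k := 0) hle hasMatchingIn_zero

lemma mul_le_card_ownPairs (hdis : Disjunct d col) (hc : ¬ IsolatedCol col c)
    (hw : 3 * #(col c) ≤ 5 * d + 2) : (d + 1) * d ≤ #(ownPairs col c) := by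
  classical
  obtain ⟨s, hs⟩ : ∃ s, #(col c) = d + (s + 1) := ⟨#(col c) - d - 1, by
    have := hdis.lt_card hc
    omega⟩
  have h := sub_mul_sub_le_card_interedges_compl
    (hdis.not_hasMatchingIn hc (k := s + 1) hs.le) (by omega)
  have hsub : #(col c) - s = d + 1 := by omega
  rw [hsub, Nat.add_sub_cancel] at h
  unfold ownPairs
  convert h

end Disjunct

lemma card_biUnion_lt_card_filter_not_isolatedCol [Fintype ι] [Fintype ρ]
    [DecidablePred (IsolatedCol col)] (hcard : Fintype.card ρ < Fintype.card ι) :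
    #(({c | ¬ IsolatedCol col c} : Finset ι).biUnion col) <
      #({c | ¬ IsolatedCol col c} : Finset ι) := by
  set R := ({c | ¬ IsolatedCol col c} : Finset ι).biUnion col
  have hprivate : #({c | IsolatedCol col c} : Finset ι) ≤ #Rᶜ := by
    refine card_le_card_of_forall_subsingleton (fun c i ↦ i ∈ col c ∧ ∀ j, i ∈ col j → j = c)
      (fun c hc ↦ ?_) fun _ _ c hc _ hc' ↦ hc'.2.2 c hc.2.1
    have hiso : IsolatedCol col c := (mem_filter.1 hc).2
    obtain ⟨i, hi, hpriv⟩ := id hiso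
    refine ⟨i, mem_compl.2 fun hiR ↦ ?_, hi, hpriv⟩
    obtain ⟨j, hj, hij⟩ := mem_biUnion.1 hiR
    exact (mem_filter.1 hj).2 (hpriv j hij ▸ hiso)
  have hcols := card_filter_add_card_filter_not (s := univ) fun c ↦ IsolatedCol col c
  have hrows := card_add_card_compl R
  rw [card_univ] at hcols
  omega

lemma biUnion_ownPairs_subset_offDiag (N : Finset ι) :
    N.biUnion (ownPairs col) ⊆ (N.biUnion col).offDiag := by
  classical
  exact biUnion_subset.2 fun _ hc _ hp ↦
    offDiag_mono (subset_biUnion_of_mem col hc) (mem_ownPairs.1 hp).1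

lemma Disjunct.card_mul_le_card_biUnion_mul (hdis : Disjunct d col) {N : Finset ι}
    (hN : ∀ c ∈ N, ¬ IsolatedCol col c) (hw : ∀ c ∈ N, 3 * #(col c) ≤ 5 * d + 2) :
    #N * ((d + 1) * d) ≤ #(N.biUnion col) * (#(N.biUnion col) - 1) := by
  classical
  calc #N * ((d + 1) * d)
      ≤ ∑ c ∈ N, #(ownPairs col c) :=
        card_nsmul_le_sum _ _ _ fun c hc ↦ hdis.mul_le_card_ownPairs (hN c hc) (hw c hc)
    _ = #(N.biUnion (ownPairs col)) := (card_biUnion (pairwiseDisjoint_ownPairs _)).symm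
    _ ≤ #(N.biUnion col).offDiag := card_le_card (biUnion_ownPairs_subset_offDiag N)
    _ = #(N.biUnion col) * (#(N.biUnion col) - 1) := by rw [offDiag_card, Nat.mul_sub_one]

lemma add_one_lt_of_succ_mul_le {D r : ℕ} (hD : 0 < D) (h : (r + 1) * D ≤ r * (r - 1)) :
    D + 1 < r := by
  by_contra! hle
  have hmul : r * (r - 1) ≤ r * D := Nat.mul_le_mul_left r (by omega)
  nlinarith

theorem disjunct_small_weight_bound_general [Fintype ι] [Fintype ρ]
    (hcard : Fintype.card ρ < Fintype.card ι) (hdis : Disjunct d col)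
    (hw : ∀ c, ¬ IsolatedCol col c → 3 * #(col c) ≤ 5 * d + 2) :
    d ^ 2 + d + 1 < Fintype.card ρ := by
  classical
  set N : Finset ι := {c | ¬ IsolatedCol col c}
  set R : Finset ρ := N.biUnion col
  have hN : ∀ c ∈ N, ¬ IsolatedCol col c := fun c hc ↦ (mem_filter.1 hc).2
  have hRN : #R < #N := card_biUnion_lt_card_filter_not_isolatedCol hcard
  have hd : 0 < d := by
    obtain ⟨c, hc⟩ : N.Nonempty := card_pos.1 (by omega)
    have hlt := hdis.lt_card (hN c hc)
    have hle := hw c (hN c hc)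
    omega
  have hcount : (#R + 1) * ((d + 1) * d) ≤ #R * (#R - 1) :=
    (Nat.mul_le_mul_right _ hRN).trans
      (hdis.card_mul_le_card_biUnion_mul hN fun c hc ↦ hw c (hN c hc))
  calc d ^ 2 + d + 1 = (d + 1) * d + 1 := by ring
    _ < #R := add_one_lt_of_succ_mul_le (by positivity) hcount
    _ ≤ Fintype.card ρ := card_le_univ R

end Columns

/-- A `t × n` `d`-disjunct matrix with `n > t` in which every column has weight
at most `⌊5d/3⌋` satisfies `t > d² + d + 1`. -/
theorem disjunct_small_weight_bound
    (d t n : ℕ) (hd : 1 ≤ d) (hn : n > t)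
    (col : Fin n → Finset (Fin t))
    (hdis : Disjunct d col)
    (hw : ∀ j, (col j).card ≤ 5 * d / 3) :
    t > d ^ 2 + d + 1 := by
  have hw' (c : Fin n) : 3 * #(col c) ≤ 5 * d + 2 := by
    have := hw c
    omega
  simpa using disjunct_small_weight_bound_general (by simpa using hn) hdis fun c _ ↦ hw' c
end
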